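/- Let G be a planar multigraph with vertex set T ∪ W (terminals T and non-terminals W), where W is a stable (independent) set, every vertex of W has degree at least 3, all parallel edges occur only between pairs of terminals, and the terminal set T is k-element-connected in G with k > 10. Then there exist two terminals t₁, t₂ ∈ T joined by at least ⌈k/5⌉ − 1 parallel edges. -/

import Mathlib

open SimpleGraph

/-- Two walks between the same pair of vertices are *element-disjoint* with respect to a
terminal set `T` if they share no edges and every common vertex is a terminal or an
endpoint. -/
def ElemDisjWalks {V : Type*} (T : Set V) {G : SimpleGraph V} {u v : V}
    (W₁ W₂ : G.Walk u v) : Prop :=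
  (∀ e, e ∈ W₁.edges → e ∉ W₂.edges) ∧
  (∀ x, x ∈ W₁.support → x ∈ W₂.support → x ∈ T ∪ {u, v})

/-- There exist `k` pairwise element-disjoint `u`-`v` paths in `G`
(with respect to the terminal set `T`). -/
def HasElemPaths {V : Type*} (G : SimpleGraph V) (T : Set V) (u v : V) (k : ℕ) : Prop :=
  ∃ P : Fin k → G.Walk u v, (∀ i, (P i).IsPath) ∧
    ∀ i j, i ≠ j → ElemDisjWalks T (P i) (P j)

/-- The element-connectivity `κ'_G(u,v)`: the maximum number of `u`-`v` paths that are
pairwise disjoint in edges and in non-terminal vertices. -/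
noncomputable def elemConn {V : Type*} (G : SimpleGraph V) (T : Set V) (u v : V) : ℕ :=
  sSup {k | HasElemPaths G T u v k}

/-- `G` has `H` as a minor: there are nonempty, pairwise-disjoint, connected branch sets,
one for each vertex of `H`, with an edge of `G` between the branch sets of any two
adjacent vertices of `H`. -/
def HasMinor {V : Type*} {W : Type*} (G : SimpleGraph V) (H : SimpleGraph W) : Prop :=
  ∃ f : W → Set V,
    (∀ w, (f w).Nonempty) ∧
    (∀ w, (G.induce (f w)).Connected) ∧
    (∀ w₁ w₂, w₁ ≠ w₂ → Disjoint (f w₁) (f w₂)) ∧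
    (∀ w₁ w₂, H.Adj w₁ w₂ → ∃ a ∈ f w₁, ∃ b ∈ f w₂, G.Adj a b)

/-- Planarity, via Wagner's theorem: a graph is planar iff it has neither a `K₅` minor
nor a `K₃,₃` minor. -/
def IsPlanar {V : Type*} (G : SimpleGraph V) : Prop :=
  ¬ HasMinor G (completeGraph (Fin 5)) ∧
  ¬ HasMinor G (completeBipartiteGraph (Fin 3) (Fin 3))

/-- In a multigraph given by its underlying simple graph `G` and an edge-multiplicity
function `m`, the terminals `u` and `v` are joined by `k` pairwise element-disjoint
paths: `k` paths of the underlying simple graph such that every non-terminal vertex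
lies on at most one of them and every simple edge is used at most as often as its
multiplicity. -/
def MultiElemConn {V : Type*} (G : SimpleGraph V) (m : V → V → ℕ) (T : Set V)
    (u v : V) (k : ℕ) : Prop :=
  ∃ P : Fin k → G.Walk u v, (∀ i, (P i).IsPath) ∧
    (∀ x, x ∉ T ∪ {u, v} → ({i | x ∈ (P i).support} : Set (Fin k)).Subsingleton) ∧
    (∀ a b, ({i | s(a, b) ∈ (P i).edges} : Set (Fin k)).ncard ≤ m a b)

/-! If no two terminals are joined by `⌈k/5⌉ - 1` edges, put `μ = ⌈k/5⌉ - 2`: even when all edges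
between terminals are given weight `μ`, every terminal has weighted degree at least `5 * μ + 6`.
Among the planar graphs with this property, in which up to two adjacent terminals may be exempt from
the degree condition, choose one with as few vertices and then as many edges as possible.
Contracting an edge from a nonterminal to a terminal would give a smaller instance unless the edge
lies in a triangle. Three common nonterminal neighbours of two adjacent terminals `t` and `a` would
allow cutting off a smaller instance, with exempt terminals `t` and `a`, along one of the three
triangles. Finally, joining two neighbours of a nonterminal of degree three preserves planarity, so
these neighbours are pairwise adjacent. Counting the triangles with exactly one nonterminal corner
at each terminal turns these three facts into a bound contradicting Euler's inequality
`|E| ≤ 3|V| - 6`. As planarity is defined by excluded minors, Euler's inequality is itself proved by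
contracting edges. -/

open scoped Finset

section Connectivity

variable {V U : Type*} {G : SimpleGraph V} {A : Set V}

theorem induce_preconnected_iff_forall_closed :
    (G.induce A).Preconnected ↔
      ∀ S : Set V, (A ∩ S).Nonempty → (∀ x ∈ A ∩ S, ∀ y ∈ A, G.Adj x y → y ∈ S) → A ⊆ S := by
  constructor
  · rintro hA S ⟨a, haA, haS⟩ hS b hb
    refine Relation.ReflTransGen.rec (motive := fun y _ => ↑y ∈ S) haS ?_
      ((reachable_iff_reflTransGen _ _).1 (hA ⟨a, haA⟩ ⟨b, hb⟩))
    exact fun {x y} _ hxy hx => hS x ⟨x.2, hx⟩ y y.2 hxy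
  · rintro hA ⟨a, ha⟩ ⟨b, hb⟩
    refine hA {v | ∀ hv : v ∈ A, (G.induce A).Reachable ⟨a, ha⟩ ⟨v, hv⟩}
      ⟨a, ha, fun _ => .rfl⟩ ?_ hb hb
    exact fun x hx y _ hxy hy' => (hx.2 hx.1).trans (Adj.reachable (G := G.induce A) hxy)

theorem induce_preimage_preconnected {φ : V → U} {B : Set U}
    (hφ : ∀ u, (G.induce (φ ⁻¹' {u})).Preconnected)
    (hB : ((G.map φ).induce B).Preconnected) : (G.induce (φ ⁻¹' B)).Preconnected := by
  rw [induce_preconnected_iff_forall_closed] at hB ⊢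
  intro S ⟨v, hvB, hvS⟩ hS
  have fibre_subset {u x} (hu : u ∈ B) (hx : φ x = u) (hxS : x ∈ S) : φ ⁻¹' {u} ⊆ S := by
    refine induce_preconnected_iff_forall_closed.1 (hφ u) S ⟨x, hx, hxS⟩ fun y hy z hz hyz => ?_
    have mem_of_map_eq {x} (hx : φ x = u) : x ∈ φ ⁻¹' B := by rwa [Set.mem_preimage, hx]
    exact hS y ⟨mem_of_map_eq hy.1, hy.2⟩ z (mem_of_map_eq hz) hyz
  have hBS : B ⊆ {u | φ ⁻¹' {u} ⊆ S} := by
    refine hB _ ⟨φ v, hvB, fibre_subset hvB rfl hvS⟩ fun u hu u' hu' huu' => ?_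
    obtain ⟨-, x, y, hxy, rfl, rfl⟩ := (map_adj' ..).1 huu'
    exact fibre_subset hu' rfl (hS x ⟨hu.1, hu.2 rfl⟩ y hu' hxy)
  exact fun x hx => hBS hx rfl

theorem induce_diff_singleton_preconnected {w r : V} (hA : (G.induce A).Preconnected)
    (hrw : r ≠ w) (hw : ∀ x ∈ A, G.Adj w x → x = r) :
    (G.induce (A \ {w})).Preconnected := by
  classical
  rw [induce_preconnected_iff_forall_closed] at hA ⊢
  intro S ⟨a, ⟨haA, haw⟩, haS⟩ hS
  have hAS : A ⊆ {z | Function.update id w r z ∈ S} := by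
    refine hA _ ⟨a, haA, by simpa [Function.update_of_ne haw] using haS⟩ fun x hx y hy hxy => ?_
    rcases eq_or_ne x w with rfl | hxw
    · simpa [hw y hy hxy, hrw] using hx.2
    have hxS : x ∈ S := by simpa [hxw] using hx.2
    rcases eq_or_ne y w with rfl | hyw
    · simpa [← hw x hx.1 hxy.symm] using hxS
    · simpa [hyw] using hS x ⟨⟨hx.1, hxw⟩, hxS⟩ y ⟨hy, hyw⟩ hxy
  exact fun x hx => by simpa [show x ≠ w from hx.2] using hAS hx.1

end Connectivity

section MinorModel

variable {V U W : Type*} {G G' : SimpleGraph V} {H : SimpleGraph W} {f : W → Set V}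

/-- `f` is a model of `H` in `G`: a family of branch sets witnessing that `H` is a minor of `G`.
Branch sets are nonempty because connected graphs are. -/
structure IsMinorModel (G : SimpleGraph V) (H : SimpleGraph W) (f : W → Set V) : Prop where
  connected : ∀ h, (G.induce (f h)).Connected
  disjoint : ∀ ⦃h h'⦄, h ≠ h' → Disjoint (f h) (f h')
  adj : ∀ ⦃h h'⦄, H.Adj h h' → ∃ a ∈ f h, ∃ b ∈ f h', G.Adj a b

theorem hasMinor_iff_exists_isMinorModel : HasMinor G H ↔ ∃ f, IsMinorModel G H f :=
  ⟨fun ⟨f, _, hc, hd, ha⟩ => ⟨f, hc, hd, ha⟩, fun ⟨f, hf⟩ =>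
    ⟨f, fun h => Set.nonempty_coe_sort.1 (hf.connected h).nonempty, hf.connected, hf.disjoint,
      hf.adj⟩⟩

theorem IsMinorModel.hasMinor (hf : IsMinorModel G H f) : HasMinor G H :=
  hasMinor_iff_exists_isMinorModel.2 ⟨f, hf⟩

theorem IsMinorModel.mono (hf : IsMinorModel G H f) (h : G ≤ G') : IsMinorModel G' H f where
  connected v := (hf.connected v).mono (comap_monotone _ h)
  disjoint := hf.disjoint
  adj _ _ hvv' :=
    let ⟨a, ha, b, hb, hab⟩ := hf.adj hvv'
    ⟨a, ha, b, hb, h hab⟩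

theorem IsMinorModel.eq_of_mem_of_mem (hf : IsMinorModel G H f) {h h' : W} {v : V}
    (hv : v ∈ f h) (hv' : v ∈ f h') : h = h' :=
  by_contra fun hne => Set.disjoint_left.1 (hf.disjoint hne) hv hv'

theorem HasMinor.mono (h : HasMinor G H) (hle : G ≤ G') : HasMinor G' H :=
  let ⟨_, hf⟩ := hasMinor_iff_exists_isMinorModel.1 h
  (hf.mono hle).hasMinor

theorem IsPlanar.mono (h : IsPlanar G') (hle : G ≤ G') : IsPlanar G :=
  ⟨fun h₅ => h.1 (h₅.mono hle), fun h₃₃ => h.2 (h₃₃.mono hle)⟩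

theorem IsMinorModel.preimage {φ : V → U} {f : W → Set U} (hf : IsMinorModel (G.map φ) H f)
    (hφ : ∀ u, (G.induce (φ ⁻¹' {u})).Preconnected) (hH : ∀ h, ∃ h', H.Adj h h') :
    IsMinorModel G H fun h => φ ⁻¹' f h where
  connected h :=
    let ⟨_, hh'⟩ := hH h
    let ⟨_, ha, _, _, hab⟩ := hf.adj hh'
    let ⟨_, x, _, _, hx, _⟩ := (map_adj' ..).1 hab
    (connected_iff _).2 ⟨induce_preimage_preconnected hφ (hf.connected h).preconnected,
      ⟨x, by rwa [Set.mem_preimage, hx]⟩⟩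
  disjoint _ _ hne := (hf.disjoint hne).preimage φ
  adj h h' hh' := by
    obtain ⟨a, ha, b, hb, hab⟩ := hf.adj hh'
    obtain ⟨-, x, y, hxy, rfl, rfl⟩ := (map_adj' ..).1 hab
    exact ⟨x, ha, y, hb, hxy⟩

theorem disjoint_fin_cons {n : ℕ} {A : Set V} {B : Fin n → Set V} (hAB : ∀ i, Disjoint A (B i))
    (hB : ∀ ⦃i j⦄, i ≠ j → Disjoint (B i) (B j)) ⦃i j : Fin (n + 1)⦄ (hij : i ≠ j) :
    Disjoint (Fin.cons (α := fun _ => Set V) A B i) (Fin.cons (α := fun _ => Set V) A B j) := by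
  induction i using Fin.cases <;> induction j using Fin.cases
  exacts [absurd rfl hij, hAB _, (hAB _).symm, hB fun h => hij (congrArg _ h)]

theorem IsMinorModel.cons {n : ℕ} {B : Fin n → Set V} (hB : IsMinorModel G ⊤ B)
    (hA : (G.induce A).Connected) (hAB : ∀ i, Disjoint A (B i))
    (hadj : ∀ i, ∃ a ∈ A, ∃ b ∈ B i, G.Adj a b) :
    IsMinorModel G (⊤ : SimpleGraph (Fin (n + 1))) (Fin.cons A B) where
  connected := Fin.cases hA hB.connected
  disjoint := disjoint_fin_cons hAB hB.disjoint
  adj := by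
    refine Fin.cases (Fin.cases (absurd rfl) fun j _ => hadj j) fun i =>
      Fin.cases ?_ fun j hij => ?_
    · exact fun _ => let ⟨a, ha, b, hb, hab⟩ := hadj i; ⟨b, hb, a, ha, hab.symm⟩
    · exact hB.adj (fun h => hij (congrArg _ h))

theorem hasMinor_completeBipartiteGraph {X Y : Type*} {A : X → Set V} {B : Y → Set V}
    (hA : ∀ i, (G.induce (A i)).Connected) (hB : ∀ j, (G.induce (B j)).Connected)
    (hAA : ∀ ⦃i i'⦄, i ≠ i' → Disjoint (A i) (A i'))
    (hBB : ∀ ⦃j j'⦄, j ≠ j' → Disjoint (B j) (B j'))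
    (hAB : ∀ i j, Disjoint (A i) (B j)) (hadj : ∀ i j, ∃ a ∈ A i, ∃ b ∈ B j, G.Adj a b) :
    HasMinor G (completeBipartiteGraph X Y) := by
  refine IsMinorModel.hasMinor (f := Sum.elim A B) ⟨Sum.rec hA hB, ?_, ?_⟩
  · rintro (i | j) (i' | j') hne
    exacts [hAA (hne <| congrArg _ ·), hAB i j', (hAB i' j).symm, hBB (hne <| congrArg _ ·)]
  · rintro (i | j) (i' | j') hadj' <;> simp only [completeBipartiteGraph_adj] at hadj'
    · simp at hadj'
    · exact hadj i j'
    · exact let ⟨a, ha, b, hb, hab⟩ := hadj i' j; ⟨b, hb, a, ha, hab.symm⟩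
    · simp at hadj'

end MinorModel

section Contraction

variable {V W : Type*} {G : SimpleGraph V} {H : SimpleGraph W} {w t : V}

open scoped Classical in
/-- The graph obtained from `G` by contracting the edge `wt` into its end `t`. The vertex type is
unchanged and `w` becomes isolated. -/
noncomputable def contract (G : SimpleGraph V) (w t : V) : SimpleGraph V :=
  G.map (Function.update id w t)

theorem contract_adj_of_adj {u v : V} (huv : G.Adj u v) (hu : u ≠ w) (hv : v ≠ w) :
    (contract G w t).Adj u v :=
  (map_adj' ..).2 ⟨huv.ne, u, v, huv, by simp [hu], by simp [hv]⟩

theorem contract_adj_right {u : V} (hwu : G.Adj w u) (htu : t ≠ u) : (contract G w t).Adj t u :=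
  (map_adj' ..).2 ⟨htu, w, u, hwu, by simp, by simp [hwu.ne']⟩

theorem adj_or_eq_of_contract_adj {u v : V} (huv : (contract G w t).Adj u v) :
    G.Adj u v ∨ u = t ∨ v = t := by
  classical
  obtain ⟨-, x, y, hxy, rfl, rfl⟩ := (map_adj' ..).1 huv
  rcases eq_or_ne x w with rfl | hx
  · simp
  rcases eq_or_ne y w with rfl | hy
  · simp
  · simp [hx, hy, hxy]

theorem not_contract_adj (hwt : w ≠ t) (u : V) : ¬(contract G w t).Adj w u := by
  classical
  intro huv
  obtain ⟨-, x, y, -, hx, -⟩ := (map_adj' ..).1 huv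
  rcases eq_or_ne x w with rfl | hxw
  · simp [hwt.symm] at hx
  · simp [hxw] at hx

theorem preconnected_induce_preimage_update [DecidableEq V] (hwt : G.Adj w t) (u : V) :
    (G.induce (Function.update id w t ⁻¹' {u})).Preconnected := by
  rcases eq_or_ne u t with rfl | hut
  · have : Function.update id w u ⁻¹' {u} = {w, u} := by
      ext v
      rcases eq_or_ne v w with rfl | hv <;> simp [*]
    rw [this]
    exact (induce_pair_connected_of_adj hwt).preconnected
  · have : (Function.update id w t ⁻¹' {u}).Subsingleton := by
      intro v hv v' hv'
      have hne {v} (hv : Function.update id w t v = u) : v ≠ w := by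
        rintro rfl
        exact hut (by simpa using hv.symm)
      simpa [hne hv, hne hv'] using hv.trans hv'.symm
    have := this.coe_sort
    exact .of_subsingleton

theorem HasMinor.of_contract (h : HasMinor (contract G w t) H) (hwt : G.Adj w t)
    (hH : ∀ h, ∃ h', H.Adj h h') : HasMinor G H := by
  classical
  obtain ⟨f, hf⟩ := hasMinor_iff_exists_isMinorModel.1 h
  exact (hf.preimage (preconnected_induce_preimage_update hwt) hH).hasMinor

theorem IsPlanar.contract (hG : IsPlanar G) (hwt : G.Adj w t) : IsPlanar (contract G w t) :=
  ⟨fun h => hG.1 (h.of_contract hwt fun i => exists_ne i |>.imp fun _ => Ne.symm),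
    fun h => hG.2 (h.of_contract hwt (by simp [completeBipartiteGraph_adj]))⟩

end Contraction

section CubicVertex

variable {V W : Type*} {G : SimpleGraph V} {H : SimpleGraph W} {f : W → Set V} {w p q r : V}

theorem sup_edge_adj_iff {w u : V} (hp : w ≠ p) (hq : w ≠ q) :
    (G ⊔ edge p q).Adj w u ↔ G.Adj w u := by
  simp only [sup_adj, edge_adj]
  tauto

theorem induce_sup_edge_eq {A : Set V} (h : p ∈ A → q ∉ A) :
    (G ⊔ edge p q).induce A = G.induce A := by
  ext ⟨u, hu⟩ ⟨v, hv⟩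
  simp only [comap_adj, Function.Embedding.subtype_apply, sup_adj, edge_adj, or_iff_left_iff_imp]
  rintro ⟨⟨rfl, rfl⟩ | ⟨rfl, rfl⟩, -⟩
  exacts [absurd hv (h hu), absurd hu (h hv)]

theorem IsMinorModel.of_sup_edge (hf : IsMinorModel (G ⊔ edge p q) H f) (hwp : G.Adj w p)
    (hwq : G.Adj w q) (hconn : ∀ h, p ∈ f h → q ∈ f h → w ∈ f h)
    (hadj : ∀ h h', H.Adj h h' → p ∈ f h → q ∈ f h' → ∃ a ∈ f h, ∃ b ∈ f h', G.Adj a b) :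
    IsMinorModel G H f where
  connected h := by
    refine (connected_iff _).2 ⟨?_, (hf.connected h).nonempty⟩
    have hpre := (hf.connected h).preconnected
    rw [induce_preconnected_iff_forall_closed] at hpre ⊢
    intro S hne hS
    refine hpre S hne fun x hx y hy hxy => ?_
    rw [sup_adj, edge_adj] at hxy
    rcases hxy with hxy | ⟨⟨rfl, rfl⟩ | ⟨rfl, rfl⟩, -⟩
    · exact hS x hx y hy hxy
    · have hw := hconn h hx.1 hy
      exact hS w ⟨hw, hS _ hx w hw hwp.symm⟩ _ hy hwq
    · have hw := hconn h hy hx.1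
      exact hS w ⟨hw, hS _ hx w hw hwq.symm⟩ _ hy hwp
  disjoint := hf.disjoint
  adj h h' hh' := by
    obtain ⟨a, ha, b, hb, hab⟩ := hf.adj hh'
    rw [sup_adj, edge_adj] at hab
    rcases hab with hab | ⟨⟨rfl, rfl⟩ | ⟨rfl, rfl⟩, -⟩
    · exact ⟨a, ha, b, hb, hab⟩
    · exact hadj h h' hh' ha hb
    · exact let ⟨x, hx, y, hy, hxy⟩ := hadj h' h hh'.symm hb ha; ⟨y, hy, x, hx, hxy.symm⟩

theorem IsMinorModel.preconnected_diff_singleton (hf : IsMinorModel (G ⊔ edge p q) H f)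
    (hN : G.neighborSet w = {p, q, r})
    (hw : ∀ h, w ∈ f h → p ∉ f h ∧ q ∉ f h) (h : W) :
    ((G ⊔ edge p q).induce (f h \ {w})).Preconnected := by
  have hwN (u : V) : G.Adj w u ↔ u = p ∨ u = q ∨ u = r := by simp [← mem_neighborSet, hN]
  by_cases hwh : w ∈ f h
  · refine induce_diff_singleton_preconnected (hf.connected h).preconnected
      ((hwN r).2 (by simp)).ne' fun x hx hwx => ?_
    rw [sup_edge_adj_iff ((hwN p).2 (by simp)).ne ((hwN q).2 (by simp)).ne, hwN] at hwx
    rcases hwx with rfl | rfl | rfl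
    exacts [absurd hx (hw h hwh).1, absurd hx (hw h hwh).2, rfl]
  · rw [Set.sdiff_singleton_eq_self hwh]
    exact (hf.connected h).preconnected

theorem IsMinorModel.contract_of_sup_edge (hf : IsMinorModel (G ⊔ edge p q) H f)
    (hN : G.neighborSet w = {p, q, r})
    (hw : ∀ h, w ∈ f h → p ∉ f h ∧ q ∉ f h ∧ r ∈ f h)
    (hadj : ∀ h h', H.Adj h h' → w ∈ f h → q ∈ f h' → p ∈ f h') :
    IsMinorModel (contract G w p) H fun h => f h \ {w} := by
  have hwN (u : V) : G.Adj w u ↔ u = p ∨ u = q ∨ u = r := by simp [← mem_neighborSet, hN]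
  have hwp : G.Adj w p := (hwN p).2 (by simp)
  have hwq : G.Adj w q := (hwN q).2 (by simp)
  have hwr : G.Adj w r := (hwN r).2 (by simp)
  have adj_contract {u v : V} (huv : (G ⊔ edge p q).Adj u v) (hu : u ≠ w) (hv : v ≠ w) :
      (contract G w p).Adj u v := by
    rw [sup_adj, edge_adj] at huv
    rcases huv with huv | ⟨⟨rfl, rfl⟩ | ⟨rfl, rfl⟩, hne⟩
    · exact contract_adj_of_adj huv hu hv
    · exact contract_adj_right hwq hne
    · exact (contract_adj_right hwq hne.symm).symm
  have adj_of_mem {h h'} (hh' : H.Adj h h') (hwh : w ∈ f h) {b : V} (hb : b ∈ f h')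
      (hwb : (G ⊔ edge p q).Adj w b) :
      ∃ a ∈ f h \ {w}, ∃ b ∈ f h' \ {w}, (contract G w p).Adj a b := by
    have hr := (hw h hwh).2.2
    have hp : p ∈ f h' := by
      rw [sup_edge_adj_iff hwp.ne hwq.ne, hwN] at hwb
      rcases hwb with rfl | rfl | rfl
      exacts [hb, hadj h h' hh' hwh hb, absurd (hf.eq_of_mem_of_mem hr hb) hh'.ne]
    have hpr : p ≠ r := fun e => hh'.ne (hf.eq_of_mem_of_mem hr (e ▸ hp))
    exact ⟨r, ⟨hr, hwr.ne'⟩, p, ⟨hp, hwp.ne'⟩, (contract_adj_right hwr hpr).symm⟩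
  refine ⟨fun h => (connected_iff _).2 ⟨?_, ?_⟩, fun h h' hne => ?_, fun h h' hh' => ?_⟩
  · refine (hf.preconnected_diff_singleton hN (fun h hh => ⟨(hw h hh).1, (hw h hh).2.1⟩) h).mono ?_
    exact fun u v huv => adj_contract huv u.2.2 v.2.2
  · by_cases hwh : w ∈ f h
    · exact ⟨r, (hw h hwh).2.2, hwr.ne'⟩
    · rw [Set.sdiff_singleton_eq_self hwh]
      exact (hf.connected h).nonempty
  · exact (hf.disjoint hne).mono Set.sdiff_subset Set.sdiff_subset
  · obtain ⟨a, ha, b, hb, hab⟩ := hf.adj hh'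
    rcases eq_or_ne a w with rfl | haw
    · exact adj_of_mem hh' ha hb hab
    rcases eq_or_ne b w with rfl | hbw
    · exact let ⟨x, hx, y, hy, hxy⟩ := adj_of_mem hh'.symm hb ha hab.symm; ⟨y, hy, x, hx, hxy.symm⟩
    · exact ⟨a, ⟨ha, haw⟩, b, ⟨hb, hbw⟩, adj_contract hab haw hbw⟩

theorem IsMinorModel.exists_of_sup_edge (hf : IsMinorModel (G ⊔ edge p q) H f) (hwp : G.Adj w p)
    (hwq : G.Adj w q) (hG : ¬HasMinor G H) :
    (∀ h, w ∈ f h → p ∉ f h ∧ q ∉ f h) ∧ ∃ j k, (j = k ∨ H.Adj j k) ∧ p ∈ f j ∧ q ∈ f k := by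
  have hw (h : W) (hwh : w ∈ f h) : p ∉ f h ∧ q ∉ f h := by
    by_contra hpq
    refine hG (hf.of_sup_edge hwp hwq (fun g hp hq => ?_) fun g g' hgg' hp hq => ?_).hasMinor
    · by_cases hph : p ∈ f h
      · rwa [hf.eq_of_mem_of_mem hp hph]
      · rwa [hf.eq_of_mem_of_mem hq (show q ∈ f h by tauto)]
    · by_cases hph : p ∈ f h
      · exact ⟨w, by rwa [hf.eq_of_mem_of_mem hp hph], q, hq, hwq⟩
      · exact ⟨p, hp, w, by rwa [hf.eq_of_mem_of_mem hq (show q ∈ f h by tauto)], hwp.symm⟩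
  refine ⟨hw, ?_⟩
  by_contra! hpq
  refine hG (hf.of_sup_edge hwp hwq (fun h hp hq => absurd hq ?_) fun h h' hh' hp hq =>
    absurd hq ?_).hasMinor
  exacts [hpq h h (.inl rfl) hp, hpq h h' (.inr hh') hp]

theorem IsMinorModel.exists_triangle (hf : IsMinorModel (G ⊔ edge p q) H f)
    (hN : G.neighborSet w = {p, q, r}) (hG : ¬HasMinor G H) (hH : ∀ h, ∃ h', H.Adj h h')
    (hr : ∀ h, w ∈ f h → r ∈ f h) :
    ∃ i j k, H.Adj i j ∧ H.Adj i k ∧ H.Adj j k ∧ w ∈ f i ∧ r ∈ f i ∧ p ∈ f j ∧ q ∈ f k := by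
  have hwp : G.Adj w p := by simp [← mem_neighborSet, hN]
  have hwq : G.Adj w q := by simp [← mem_neighborSet, hN]
  obtain ⟨hw, j, k, hjk, hp, hq⟩ := hf.exists_of_sup_edge hwp hwq hG
  have hw' (h : W) (hwh : w ∈ f h) : p ∉ f h ∧ q ∉ f h ∧ r ∈ f h :=
    ⟨(hw h hwh).1, (hw h hwh).2, hr h hwh⟩
  have hwk : ∃ i, H.Adj i k ∧ w ∈ f i ∧ p ∉ f k := by
    by_contra! hcon
    refine hG ((hf.contract_of_sup_edge hN hw' fun h h' hh' hwh hqh => ?_).hasMinor.of_contract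
      hwp hH)
    obtain rfl := hf.eq_of_mem_of_mem hq hqh
    exact hcon h hh' hwh
  have hwj : ∃ i, H.Adj i j ∧ w ∈ f i ∧ q ∉ f j := by
    by_contra! hcon
    rw [edge_comm] at hf
    rw [Set.insert_comm] at hN
    refine hG ((hf.contract_of_sup_edge hN (fun h hwh => ?_) fun h h' hh' hwh hph =>
      ?_).hasMinor.of_contract hwq hH)
    · exact ⟨(hw h hwh).2, (hw h hwh).1, hr h hwh⟩
    · obtain rfl := hf.eq_of_mem_of_mem hp hph
      exact hcon h hh' hwh
  obtain ⟨i, hik, hwi, hpk⟩ := hwk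
  obtain ⟨i', hij, hwi', -⟩ := hwj
  obtain rfl := hf.eq_of_mem_of_mem hwi hwi'
  exact ⟨i, j, k, hij, hik, hjk.resolve_left fun e => hpk (e ▸ hp), hwi, hr i hwi, hp, hq⟩

theorem IsMinorModel.eq_singleton (hf : IsMinorModel (G ⊔ edge p q) H f)
    (hN : G.neighborSet w = {p, q, r}) {i : W} (hw : w ∈ f i) (hp : p ∉ f i) (hq : q ∉ f i)
    (hr : r ∉ f i) : f i = {w} := by
  have hwp : G.Adj w p := by simp [← mem_neighborSet, hN]
  have hwq : G.Adj w q := by simp [← mem_neighborSet, hN]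
  have hi := induce_preconnected_iff_forall_closed.1 (hf.connected i).preconnected
  refine (hi {w} ⟨w, hw, rfl⟩ ?_).antisymm (by simpa using hw)
  rintro x ⟨-, rfl⟩ y hy hxy
  rw [sup_edge_adj_iff hwp.ne hwq.ne, ← mem_neighborSet, hN] at hxy
  rcases hxy with rfl | rfl | rfl <;> contradiction

theorem IsMinorModel.exists_forall_adj_of_notMem (hf : IsMinorModel (G ⊔ edge p q) H f)
    (hN : G.neighborSet w = {p, q, r}) (hG : ¬HasMinor G H) {i : W} (hw : w ∈ f i)
    (hr : r ∉ f i) :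
    ∃ j k l, (j = k ∨ H.Adj j k) ∧ ∀ h, H.Adj i h → h = j ∨ h = k ∨ h = l := by
  have hwp : G.Adj w p := by simp [← mem_neighborSet, hN]
  have hwq : G.Adj w q := by simp [← mem_neighborSet, hN]
  obtain ⟨hpq, j, k, hjk, hp, hq⟩ := hf.exists_of_sup_edge hwp hwq hG
  have hi := hf.eq_singleton hN hw (hpq i hw).1 (hpq i hw).2 hr
  have hnbr (h : W) (hh : H.Adj i h) : h = j ∨ h = k ∨ r ∈ f h := by
    obtain ⟨a, ha, b, hb, hab⟩ := hf.adj hh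
    rw [hi, Set.mem_singleton_iff] at ha
    rw [ha, sup_edge_adj_iff hwp.ne hwq.ne, ← mem_neighborSet, hN] at hab
    rcases hab with rfl | rfl | rfl
    exacts [.inl (hf.eq_of_mem_of_mem hb hp), .inr (.inl (hf.eq_of_mem_of_mem hb hq)),
      .inr (.inr hb)]
  by_cases hl : ∃ l, r ∈ f l
  · obtain ⟨l, hl⟩ := hl
    exact ⟨j, k, l, hjk, fun h hh =>
      (hnbr h hh).imp_right (Or.imp_right fun hrh => hf.eq_of_mem_of_mem hrh hl)⟩
  · exact ⟨j, k, j, hjk, fun h hh =>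
      (hnbr h hh).imp_right (Or.imp_right fun hrh => absurd ⟨h, hrh⟩ hl)⟩

theorem IsMinorModel.exists_adj_of_notMem (hf : IsMinorModel (G ⊔ edge p q) H f)
    (hN : G.neighborSet w = {p, q, r}) {a b : W} (hab : H.Adj a b) (hp : p ∉ f b) (hq : q ∉ f b)
    (hr : r ∉ f b) : ∃ x ∈ f a \ {w}, ∃ y ∈ f b, G.Adj x y := by
  obtain ⟨x, hx, y, hy, hxy⟩ := hf.adj hab
  have hxy : G.Adj x y := by
    rw [sup_adj, edge_adj] at hxy
    rcases hxy with hxy | ⟨⟨rfl, rfl⟩ | ⟨rfl, rfl⟩, -⟩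
    exacts [hxy, absurd hy hq, absurd hy hp]
  refine ⟨x, ⟨hx, ?_⟩, y, hy, hxy⟩
  rintro rfl
  rw [← mem_neighborSet, hN] at hxy
  rcases hxy with rfl | rfl | rfl <;> contradiction

theorem exists_injective_fin_two_of_ne {i j k : Fin 5} (hij : i ≠ j) (hik : i ≠ k)
    (hjk : j ≠ k) :
    ∃ ρ : Fin 2 → Fin 5, Function.Injective ![i, j, k] ∧ Function.Injective ρ ∧
      ∀ s s', ![i, j, k] s ≠ ρ s' := by
  have exists_rest : ∀ i j k : Fin 5, ∃ d e, d ≠ e ∧ d ∉ [i, j, k] ∧ e ∉ [i, j, k] := by decide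
  obtain ⟨d, e, hde, hd, he⟩ := exists_rest i j k
  simp only [List.mem_cons, List.not_mem_nil, or_false, not_or] at hd he
  refine ⟨![d, e], ?_, ?_, ?_⟩
  · simp [Function.Injective, Fin.forall_fin_succ, hij, hik, hjk, hij.symm, hik.symm, hjk.symm]
  · simp [Function.Injective, Fin.forall_fin_two, hde, hde.symm]
  · simp [Fin.forall_fin_succ, hd, he, eq_comm]

theorem IsMinorModel.hasMinor_completeBipartiteGraph_of_sup_edge {f : Fin 5 → Set V}
    (hf : IsMinorModel (G ⊔ edge p q) (completeGraph (Fin 5)) f)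
    (hN : G.neighborSet w = {p, q, r}) {i j k : Fin 5} (hij : i ≠ j) (hik : i ≠ k) (hjk : j ≠ k)
    (hw : w ∈ f i) (hr : r ∈ f i) (hp : p ∈ f j) (hq : q ∈ f k) :
    HasMinor G (completeBipartiteGraph (Fin 3) (Fin 3)) := by
  have hwp : G.Adj w p := by simp [← mem_neighborSet, hN]
  have hwq : G.Adj w q := by simp [← mem_neighborSet, hN]
  have hwr : G.Adj w r := by simp [← mem_neighborSet, hN]
  obtain ⟨ρ, hσ, hρ, hσρ⟩ := exists_injective_fin_two_of_ne hij hik hjk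
  have notMem {v : V} {a b : Fin 5} (hv : v ∈ f a) (hab : a ≠ b) : v ∉ f b :=
    fun hb => hab (hf.eq_of_mem_of_mem hv hb)
  have hpq (a : Fin 5) (hpa : p ∈ f a) : q ∉ f a := by
    obtain rfl := hf.eq_of_mem_of_mem hp hpa
    exact notMem hq hjk.symm
  have hwpq (a : Fin 5) (ha : w ∈ f a) : p ∉ f a ∧ q ∉ f a := by
    obtain rfl := hf.eq_of_mem_of_mem hw ha
    exact ⟨notMem hp hij.symm, notMem hq hik.symm⟩
  have connected (a : Fin 5) : (G.induce (f a)).Connected :=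
    induce_sup_edge_eq (hpq a) ▸ hf.connected a
  have adj_singleton (s : Fin 3) : ∃ x ∈ f (![i, j, k] s) \ {w}, G.Adj w x := by
    fin_cases s
    exacts [⟨r, ⟨hr, hwr.ne'⟩, hwr⟩, ⟨p, ⟨hp, hwp.ne'⟩, hwp⟩, ⟨q, ⟨hq, hwq.ne'⟩, hwq⟩]
  refine hasMinor_completeBipartiteGraph (A := fun s => f (![i, j, k] s) \ {w})
    (B := Fin.cons {w} (f ∘ ρ)) (fun s => (connected_iff _).2 ⟨?_, ?_⟩) ?_
    (fun s s' hs => ?_) (disjoint_fin_cons (fun s => ?_) fun s s' hs => ?_) (fun s => ?_)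
    fun s => ?_
  · rw [← induce_sup_edge_eq fun h => fun h' => hpq _ h.1 h'.1]
    exact hf.preconnected_diff_singleton hN hwpq _
  · exact let ⟨x, hx, _⟩ := adj_singleton s; ⟨x, hx⟩
  · exact Fin.cases (.of_subsingleton (V := ({w} : Set V))) fun s => connected _
  · exact (hf.disjoint (hσ.ne hs)).mono Set.sdiff_subset Set.sdiff_subset
  · exact Set.disjoint_singleton_left.2 (notMem hw (hσρ 0 s))
  · exact hf.disjoint (hρ.ne hs)
  · refine Fin.cases Set.disjoint_sdiff_left fun s' => ?_
    exact (hf.disjoint (hσρ s s')).mono_left Set.sdiff_subset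
  · refine Fin.cases ?_ fun s' => ?_
    · exact let ⟨x, hx, hwx⟩ := adj_singleton s; ⟨x, hx, w, rfl, hwx.symm⟩
    · exact hf.exists_adj_of_notMem hN (hσρ s s') (notMem hp (hσρ 1 s')) (notMem hq (hσρ 2 s'))
        (notMem hr (hσρ 0 s'))

theorem IsPlanar.sup_edge (hG : IsPlanar G) (hN : G.neighborSet w = {p, q, r}) :
    IsPlanar (G ⊔ edge p q) := by
  constructor <;> intro h <;> obtain ⟨f, hf⟩ := hasMinor_iff_exists_isMinorModel.1 h
  · have exists_notMem : ∀ i j k l : Fin 5, ∃ h, i ≠ h ∧ ¬(h = j ∨ h = k ∨ h = l) := by decide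
    have hr (h : Fin 5) (hw : w ∈ f h) : r ∈ f h := by
      by_contra hr
      obtain ⟨j, k, l, -, hjkl⟩ := hf.exists_forall_adj_of_notMem hN hG.1 hw hr
      obtain ⟨g, hg, hgn⟩ := exists_notMem h j k l
      exact hgn (hjkl g hg)
    obtain ⟨i, j, k, hij, hik, hjk, hw, hr, hp, hq⟩ :=
      hf.exists_triangle hN hG.1 (fun i => exists_ne i |>.imp fun _ => Ne.symm) hr
    exact hG.2 (hf.hasMinor_completeBipartiteGraph_of_sup_edge hN hij hik hjk hw hr hp hq)
  · have triangle_free : ∀ i j k, (completeBipartiteGraph (Fin 3) (Fin 3)).Adj i j →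
        (completeBipartiteGraph (Fin 3) (Fin 3)).Adj i k →
        ¬(completeBipartiteGraph (Fin 3) (Fin 3)).Adj j k := by
      simp
    have exists_notMem : ∀ i j k l : Fin 3 ⊕ Fin 3,
        (j = k ∨ (completeBipartiteGraph (Fin 3) (Fin 3)).Adj j k) →
        ∃ h, (completeBipartiteGraph (Fin 3) (Fin 3)).Adj i h ∧ ¬(h = j ∨ h = k ∨ h = l) := by
      simp only [completeBipartiteGraph_adj]
      decide
    have hr (h : Fin 3 ⊕ Fin 3) (hw : w ∈ f h) : r ∈ f h := by
      by_contra hr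
      obtain ⟨j, k, l, hjk, hjkl⟩ := hf.exists_forall_adj_of_notMem hN hG.2 hw hr
      obtain ⟨g, hg, hgn⟩ := exists_notMem h j k l hjk
      exact hgn (hjkl g hg)
    obtain ⟨i, j, k, hij, hik, hjk, -⟩ := hf.exists_triangle hN hG.2 (by simp) hr
    exact triangle_free i j k hij hik hjk

end CubicVertex

section EdgeBound

open scoped Classical

variable {V : Type*} {G : SimpleGraph V}

theorem HasMinor.of_isContained {W : Type*} {H : SimpleGraph W} (h : H ⊑ G) : HasMinor G H := by
  obtain ⟨φ, hφ⟩ := h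
  refine IsMinorModel.hasMinor (f := fun i => {φ i}) ⟨fun i => .of_subsingleton, ?_, ?_⟩
  · exact fun i j hij => Set.disjoint_singleton.2 (hφ.ne hij)
  · exact fun i j hij => ⟨φ i, rfl, φ j, rfl, φ.map_adj hij⟩

variable {S : Finset V} {v w t : V}

theorem contract_support_subset (hS : G.support ⊆ S) (hwt : G.Adj w t) :
    (contract G w t).support ⊆ S.erase w := by
  rintro a ⟨b, hab⟩
  refine Finset.mem_coe.2 (Finset.mem_erase.2 ⟨?_, ?_⟩)
  · rintro rfl
    exact not_contract_adj hwt.ne b hab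
  · obtain ⟨-, x, y, hxy, rfl, -⟩ := (map_adj' ..).1 hab
    rcases eq_or_ne x w with rfl | hx
    · simpa using hS ⟨x, hwt.symm⟩
    · simpa [hx] using hS ⟨y, hxy⟩

variable [Fintype V]

theorem card_edgeFinset_le_contract (hwt : G.Adj w t) :
    #G.edgeFinset ≤
      #(contract G w t).edgeFinset + #(G.neighborFinset w ∩ G.neighborFinset t) + 1 := by
  set X : Finset V := (G.neighborFinset w \ G.neighborFinset t).erase t with hX
  have hsub : (G.edgeFinset \ G.incidenceFinset w) ∪ X.image (s(t, ·)) ⊆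
      (contract G w t).edgeFinset := by
    refine Finset.union_subset (fun e he => ?_) (Finset.image_subset_iff.2 fun u hu => ?_)
    · induction e with | _ a b =>
      simp only [Finset.mem_sdiff, mem_edgeFinset, mem_edgeSet, mem_incidenceFinset,
        mk'_mem_incidenceSet_iff, not_and, not_or] at he ⊢
      exact contract_adj_of_adj he.1 (Ne.symm (he.2 he.1).1) (Ne.symm (he.2 he.1).2)
    · simp only [hX, Finset.mem_erase, Finset.mem_sdiff, mem_neighborFinset] at hu
      simpa using contract_adj_right hu.2.1 hu.1.symm
  have hdisj : Disjoint (G.edgeFinset \ G.incidenceFinset w) (X.image (s(t, ·))) := by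
    refine Finset.disjoint_right.2 fun e he => ?_
    obtain ⟨u, hu, rfl⟩ := Finset.mem_image.1 he
    simp only [hX, Finset.mem_erase, Finset.mem_sdiff, mem_neighborFinset] at hu
    simp [hu.2.2]
  have hcard := Finset.card_le_card hsub
  rw [Finset.card_union_of_disjoint hdisj,
    Finset.card_image_of_injective _ fun a b h => Sym2.congr_right.1 h] at hcard
  have hinc := Finset.le_card_sdiff (G.incidenceFinset w) G.edgeFinset
  rw [card_incidenceFinset_eq_degree] at hinc
  have hX' : #X + 1 + #(G.neighborFinset w ∩ G.neighborFinset t) = G.degree w := by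
    rw [hX, Finset.card_erase_add_one (by simp [hwt]), Finset.card_sdiff_add_card_inter,
      card_neighborFinset_eq_degree]
  lia

theorem degree_lt_card_of_support_subset (hS : G.support ⊆ S) (hv : v ∈ S) :
    G.degree v < #S := by
  rw [← card_neighborFinset_eq_degree]
  refine Finset.card_lt_card ((Finset.ssubset_iff_of_subset fun u hu => ?_).2 ⟨v, hv, by simp⟩)
  exact hS ⟨v, ((mem_neighborFinset ..).1 hu).symm⟩

theorem sum_degree_eq_of_support_subset (hS : G.support ⊆ S) :
    ∑ v ∈ S, G.degree v = 2 * #G.edgeFinset := by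
  rw [← sum_degrees_eq_twice_card_edges]
  refine Finset.sum_subset (Finset.subset_univ S) fun v _ hv => ?_
  rw [← card_neighborFinset_eq_degree, Finset.card_eq_zero, Finset.eq_empty_iff_forall_notMem]
  exact fun u hu => hv (hS ⟨u, (mem_neighborFinset ..).1 hu⟩)

theorem two_mul_card_edgeFinset_le_of_support_subset (hS : G.support ⊆ S) :
    2 * #G.edgeFinset ≤ #S * (#S - 1) := by
  rw [← sum_degree_eq_of_support_subset hS, ← smul_eq_mul]
  exact Finset.sum_le_card_nsmul S (G.degree ·) _ fun v hv =>
    Nat.le_sub_one_of_lt (degree_lt_card_of_support_subset hS hv)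

theorem hasMinor_completeGraph_five_of_isClique (hv : 4 ≤ G.degree v)
    (hN : G.IsClique (G.neighborFinset v)) : HasMinor G (completeGraph (Fin 5)) := by
  obtain ⟨N, hNv, hN4⟩ := Finset.exists_subset_card_eq
    (hv.trans_eq (card_neighborFinset_eq_degree ..).symm)
  have hclique : G.IsNClique 4 N := ⟨hN.subset (mod_cast hNv), hN4⟩
  have hclique' := hclique.insert (a := v) fun u hu => by simpa using hNv hu
  exact .of_isContained ((not_cliqueFree_iff_top_isContained 5).1 hclique'.not_cliqueFree)

theorem exists_pair_forall_adj {N : Finset V} (hN : 2 ≤ #N)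
    (hmiss : ∀ u ∈ N, #(N \ G.neighborFinset u) ≤ 2) :
    ∃ p ∈ N, ∃ q ∈ N, p ≠ q ∧ ∀ x ∈ N, x ≠ p → x ≠ q → G.Adj p x ∧ G.Adj q x := by
  by_cases hclique : ∃ p ∈ N, ∃ q ∈ N, p ≠ q ∧ ¬G.Adj p q
  · obtain ⟨p, hp, q, hq, hpq, hadj⟩ := hclique
    refine ⟨p, hp, q, hq, hpq, fun x hx hxp hxq => ?_⟩
    have adj_of_not_adj {u y : V} (hu : u ∈ N) (hy : y ∈ N) (huy : u ≠ y) (hadj : ¬G.Adj u y)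
        (hxu : x ≠ u) (hxy : x ≠ y) : G.Adj u x := by
      by_contra hux
      have hsub : ({u, y, x} : Finset V) ⊆ N \ G.neighborFinset u := by
        simp [Finset.insert_subset_iff, *]
      have := Finset.card_le_card hsub
      rw [Finset.card_eq_three.2 ⟨u, y, x, huy, hxu.symm, hxy.symm, rfl⟩] at this
      exact absurd (hmiss u hu) (by lia)
    exact ⟨adj_of_not_adj hp hq hpq hadj hxp hxq,
      adj_of_not_adj hq hp hpq.symm (fun h => hadj h.symm) hxq hxp⟩
  · push Not at hclique
    obtain ⟨p, hp, q, hq, hpq⟩ := Finset.one_lt_card.1 hN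
    exact ⟨p, hp, q, hq, hpq, fun x hx hxp hxq =>
      ⟨hclique p hp x hx hxp.symm, hclique q hq x hx hxq.symm⟩⟩

theorem hasMinor_completeBipartiteGraph_of_degree_eq_five (hv : G.degree v = 5)
    (hmiss : ∀ u, G.Adj v u → #(G.neighborFinset v \ G.neighborFinset u) ≤ 2) :
    HasMinor G (completeBipartiteGraph (Fin 3) (Fin 3)) := by
  rw [← card_neighborFinset_eq_degree] at hv
  obtain ⟨p, hp, q, hq, hpq, hadj⟩ :=
    exists_pair_forall_adj (by lia) fun u hu => hmiss u ((mem_neighborFinset ..).1 hu)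
  have hvp : v ≠ p := ((mem_neighborFinset ..).1 hp).ne
  have hvq : v ≠ q := ((mem_neighborFinset ..).1 hq).ne
  refine .of_isContained (completeBipartiteGraph_isContained_iff.2
    ⟨{v, p, q}, ((G.neighborFinset v).erase p).erase q, ?_, ?_, ?_⟩)
  · rw [Finset.card_eq_three.2 ⟨v, p, q, hvp, hvq, hpq, rfl⟩, Fintype.card_fin]
  · rw [Finset.card_erase_of_mem (by simpa [hpq.symm] using hq), Finset.card_erase_of_mem hp, hv,
      Fintype.card_fin]
  · intro a ha x hx
    simp only [Finset.coe_insert, Finset.coe_singleton, Set.mem_insert_iff, Set.mem_singleton_iff,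
      Finset.coe_erase, Set.mem_sdiff] at ha hx
    obtain ⟨⟨hx, hxp⟩, hxq⟩ := hx
    rcases ha with rfl | rfl | rfl
    · simpa using hx
    · exact (hadj x hx hxp hxq).1
    · exact (hadj x hx hxp hxq).2

theorem IsPlanar.exists_adj_card_inter_neighborFinset_lt_three (hG : IsPlanar G)
    (hpos : 0 < G.degree v) (hv : G.degree v ≤ 5) :
    ∃ u, G.Adj v u ∧ #(G.neighborFinset v ∩ G.neighborFinset u) < 3 := by
  by_contra! hcommon
  have hcard (u : V) := (G.neighborFinset v).card_sdiff_add_card_inter (G.neighborFinset u)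
  simp only [card_neighborFinset_eq_degree] at hcard
  have hfour : 4 ≤ G.degree v := by
    obtain ⟨u, hu⟩ := (G.degree_pos_iff_exists_adj v).1 hpos
    have hpos : 0 < #(G.neighborFinset v \ G.neighborFinset u) :=
      Finset.card_pos.2 ⟨u, by simpa using hu⟩
    have := hcard u
    have := hcommon u hu
    lia
  rcases hfour.eq_or_lt with h4 | h5
  · refine hG.1 (hasMinor_completeGraph_five_of_isClique hfour fun x hx y hy hxy => ?_)
    simp only [coe_neighborFinset, mem_neighborSet] at hx hy
    by_contra hadj
    have hone : #(G.neighborFinset v \ G.neighborFinset x) ≤ 1 := by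
      have := hcard x
      have := hcommon x hx
      lia
    exact hxy (Finset.card_le_one.1 hone x (by simpa using hx) y (by simp [hy, hadj]))
  · refine hG.2 (hasMinor_completeBipartiteGraph_of_degree_eq_five (v := v) (by lia) fun u hu => ?_)
    have := hcard u
    have := hcommon u hu
    lia

theorem exists_le_card_edgeFinset_eq {n : ℕ} (hn : n ≤ #G.edgeFinset) :
    ∃ G' ≤ G, #G'.edgeFinset = n := by
  obtain ⟨s, hsG, rfl⟩ := Finset.exists_subset_card_eq hn
  have hs : (s : Set (Sym2 V)) ⊆ G.edgeSet := fun e he => mem_edgeFinset.1 (hsG he)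
  refine ⟨fromEdgeSet s, fun u v huv => hs ((fromEdgeSet_adj _).1 huv).1, congrArg _ ?_⟩
  ext e
  simpa using fun he => G.not_isDiag_of_mem_edgeSet (hs he)

/- Contracting an edge with at most two common neighbours loses at most three edges, so in a
minimal counterexample every edge has three common neighbours, which is impossible around a vertex
of degree at most five. -/
theorem IsPlanar.card_edgeFinset_add_six_le (hG : IsPlanar G) (hS : G.support ⊆ S)
    (hcard : 3 ≤ #S) : #G.edgeFinset + 6 ≤ 3 * #S := by
  induction hn : #S generalizing G S with
  | zero => lia
  | succ n ih =>
  by_contra! hlt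
  have hn3 : 3 ≤ n := by
    have hedges := two_mul_card_edgeFinset_le_of_support_subset hS
    by_contra! hn3
    obtain rfl : n = 2 := by lia
    rw [hn] at hedges
    lia
  obtain ⟨G', hle, hG'⟩ := exists_le_card_edgeFinset_eq (G := G) (n := 3 * (n + 1) - 5) (by lia)
  have hS' : G'.support ⊆ S := (support_mono hle).trans hS
  have planar' := hG.mono hle
  have card_erase {v : V} (hv : v ∈ S) : #(S.erase v) = n := by
    rw [Finset.card_erase_of_mem hv, hn, Nat.add_sub_cancel]
  obtain ⟨v, hv, hv5⟩ : ∃ v ∈ S, G'.degree v ≤ 5 := by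
    by_contra! hsix
    have := Finset.card_nsmul_le_sum S (G'.degree ·) 6 hsix
    rw [sum_degree_eq_of_support_subset hS', hn, smul_eq_mul] at this
    lia
  have hv0 : 0 < G'.degree v := by
    by_contra hv0
    have hsupp : G'.support ⊆ S.erase v := by
      rintro a ⟨b, hab⟩
      refine Finset.mem_coe.2 (Finset.mem_erase.2 ⟨?_, hS' ⟨b, hab⟩⟩)
      rintro rfl
      exact hv0 ((G'.degree_pos_iff_exists_adj a).2 ⟨b, hab⟩)
    have := ih planar' hsupp (hn3.trans_eq (card_erase hv).symm) (card_erase hv)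
    lia
  obtain ⟨u, hvu, hu⟩ := planar'.exists_adj_card_inter_neighborFinset_lt_three hv0 hv5
  have := card_edgeFinset_le_contract hvu
  have := ih (planar'.contract hvu) (contract_support_subset hS' hvu)
    (hn3.trans_eq (card_erase hv).symm) (card_erase hv)
  lia

end EdgeBound

section Separation

variable {V : Type*} {G : SimpleGraph V} {K : Set V}

theorem connected_induce_componentCompl (C : G.ComponentCompl K) :
    (G.induce (C : Set V)).Connected := by
  refine (connected_iff _).2 ⟨?_, Set.nonempty_coe_sort.2 C.nonempty⟩
  rw [induce_preconnected_iff_forall_closed]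
  rintro S ⟨a, haC, haS⟩ hS b hbC
  obtain ⟨ha, rfl⟩ := haC
  obtain ⟨hb, hba⟩ := hbC
  have hab := (reachable_iff_reflTransGen _ _).1 (ConnectedComponent.exact hba.symm)
  suffices ∀ y : (Kᶜ : Set V), Relation.ReflTransGen (G.induce Kᶜ).Adj ⟨a, ha⟩ y →
      ↑y ∈ G.componentComplMk ha ∧ ↑y ∈ S from (this _ hab).2
  intro y hy
  induction hy with
  | refl => exact ⟨⟨ha, rfl⟩, haS⟩
  | @tail x y _ hxy ih =>
    have hyC := ComponentCompl.mem_of_adj x.1 y.1 ih.1 y.2 hxy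
    exact ⟨hyC, hS x ih y hyC hxy⟩

theorem exists_componentCompl_insert_insert {u v : V} (C : G.ComponentCompl K) (hu : u ∈ C)
    (hv : v ∈ C) (huv : u ≠ v) (hadj : ¬G.Adj u v) :
    ∃ D : G.ComponentCompl (insert u (insert v K)), (∃ x ∈ D, G.Adj u x) ∧ ∃ x ∈ D, G.Adj v x := by
  by_contra! hcon
  have hC := induce_preconnected_iff_forall_closed.1
    (connected_induce_componentCompl C).preconnected
    {y | y = u ∨ ∃ D : G.ComponentCompl (insert u (insert v K)), (∃ x ∈ D, G.Adj u x) ∧ y ∈ D}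
    ⟨u, hu, .inl rfl⟩ ?_ hv
  · rcases hC with rfl | ⟨D, -, hvD⟩
    · exact huv rfl
    · exact ComponentCompl.notMem_of_mem hvD (by simp)
  rintro x ⟨-, hx⟩ y hy hxy
  rcases eq_or_ne y u with rfl | hyu
  · exact .inl rfl
  rcases eq_or_ne y v with rfl | hyv
  · rcases hx with rfl | ⟨D, ⟨p, hp, hup⟩, hxD⟩
    · exact absurd hxy hadj
    · exact absurd hxy.symm (hcon D ⟨p, hp, hup⟩ x hxD)
  have hyK : y ∉ insert u (insert v K) := by simp [hyu, hyv, C.notMem_of_mem hy]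
  rcases hx with rfl | ⟨D, hp, hxD⟩
  · exact .inr ⟨_, ⟨y, componentComplMk_mem G hyK, hxy⟩, componentComplMk_mem G hyK⟩
  · exact .inr ⟨D, hp, ComponentCompl.mem_of_adj x y hxD hyK hxy⟩

variable {t a : V} {w : Fin 3 → V}

theorem IsPlanar.exists_forall_componentCompl_not_adj (hG : IsPlanar G) (hta : t ≠ a)
    (hw : w.Injective) (ht : ∀ i, G.Adj t (w i)) (ha : ∀ i, G.Adj a (w i))
    (C : G.ComponentCompl (insert t (insert a (Set.range w)))) : ∃ i, ∀ x ∈ C, ¬G.Adj (w i) x := by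
  by_contra! hC
  refine hG.2 (hasMinor_completeBipartiteGraph (A := fun i => {w i})
    (B := Fin.cons {t} (Fin.cons {a} fun _ : Fin 1 => (C : Set V)))
    (fun _ => .of_subsingleton) ?_ (fun i j hij => Set.disjoint_singleton.2 (hw.ne hij)) ?_
    (fun i => ?_) fun i => ?_)
  · exact Fin.cases (.of_subsingleton (V := ({t} : Set V)))
      (Fin.cases (.of_subsingleton (V := ({a} : Set V))) fun _ => connected_induce_componentCompl C)
  · refine disjoint_fin_cons (Fin.cases (Set.disjoint_singleton.2 hta) fun _ => ?_)
      (disjoint_fin_cons (fun _ => ?_) fun i j hij => absurd (Subsingleton.elim i j) hij)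
    · exact C.disjoint_right.mono_left (by simp)
    · exact C.disjoint_right.mono_left (by simp)
  · refine Fin.cases (Set.disjoint_singleton.2 (ht i).ne')
      (Fin.cases (Set.disjoint_singleton.2 (ha i).ne') fun _ => ?_)
    exact C.disjoint_right.mono_left (by simp)
  · refine Fin.cases ⟨_, rfl, t, rfl, (ht i).symm⟩
      (Fin.cases ⟨_, rfl, a, rfl, (ha i).symm⟩ fun _ => ?_)
    exact let ⟨x, hx, hwx⟩ := hC i; ⟨_, rfl, x, hx, hwx⟩

theorem IsPlanar.exists_componentCompl_forall_adj_iff (hG : IsPlanar G) (hta : t ≠ a)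
    (hw : w.Injective) (hstable : ∀ i j, ¬G.Adj (w i) (w j)) (ht : ∀ i, G.Adj t (w i))
    (ha : ∀ i, G.Adj a (w i)) {i : Fin 3} {C : G.ComponentCompl {t, a, w i}}
    (hC : ∀ j ≠ i, w j ∈ C) :
    ∃ D : G.ComponentCompl (insert t (insert a (Set.range w))),
      ∀ j, (∃ x ∈ D, G.Adj (w j) x) ↔ j ≠ i := by
  have eq_or_eq : ∀ i j : Fin 3, j ≠ i → j = i + 1 ∨ j = i + 2 := by decide
  have hK : insert (w (i + 1)) (insert (w (i + 2)) {t, a, w i}) =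
      insert t (insert a (Set.range w)) := by
    ext v
    fin_cases i <;> simp [Fin.exists_fin_succ, eq_comm] <;> tauto
  obtain ⟨D, hD⟩ := hK ▸ exists_componentCompl_insert_insert C (hC (i + 1) (by simp))
    (hC (i + 2) (by simp)) (hw.ne (by simp)) (hstable _ _)
  have hne (j : Fin 3) (hj : j ≠ i) : ∃ x ∈ D, G.Adj (w j) x := by
    obtain rfl | rfl := eq_or_eq i j hj
    exacts [hD.1, hD.2]
  obtain ⟨k, hk⟩ := hG.exists_forall_componentCompl_not_adj hta hw ht ha D
  obtain rfl : k = i := by_contra fun hki => let ⟨x, hx, hkx⟩ := hne k hki; hk x hx hkx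
  refine ⟨D, fun j => ⟨?_, hne j⟩⟩
  rintro ⟨x, hx, hkx⟩ rfl
  exact hk x hx hkx

theorem isMinorModel_insert_componentCompl (hw : w.Injective) (hwK : ∀ i, w i ∈ K)
    (D : Fin 3 → G.ComponentCompl K) (hD : ∀ i j, (∃ x ∈ D i, G.Adj (w j) x) ↔ j ≠ i) :
    IsMinorModel G ⊤ fun i => insert (w (i + 1)) (D i : Set V) where
  connected i := by
    obtain ⟨x, hx, hwx⟩ := (hD i (i + 1)).2 (by simp)
    exact connected_induce_union (s := {w (i + 1)}) .of_subsingleton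
      (connected_induce_componentCompl (D i)).preconnected rfl hx hwx
  disjoint i j hij := by
    have notMem (i j : Fin 3) : w i ∉ D j := fun h => ComponentCompl.notMem_of_mem h (hwK i)
    have hne : D i ≠ D j := fun h => (hD i i).1 (h ▸ (hD j i).2 hij) rfl
    have := ComponentCompl.pairwise_disjoint hne
    simp [Set.disjoint_insert_left, Set.disjoint_insert_right, *, hw.eq_iff, hij.symm]
  adj i j hij := by
    by_cases hj : j = i + 1
    · subst hj
      obtain ⟨x, hx, hwx⟩ := (hD i (i + 1 + 1)).2 (by fin_cases i <;> decide)
      exact ⟨x, .inr hx, _, .inl rfl, hwx.symm⟩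
    · obtain ⟨x, hx, hwx⟩ := (hD j (i + 1)).2 (Ne.symm hj)
      exact ⟨_, .inl rfl, x, .inr hx, hwx⟩

theorem IsPlanar.exists_forall_componentCompl_notMem (hG : IsPlanar G) (hta : G.Adj t a)
    (hw : w.Injective) (hstable : ∀ i j, ¬G.Adj (w i) (w j)) (ht : ∀ i, G.Adj t (w i))
    (ha : ∀ i, G.Adj a (w i)) :
    ∃ i, ∀ C : G.ComponentCompl {t, a, w i}, ∃ j ≠ i, w j ∉ C := by
  by_contra! hC
  choose C hC using hC
  choose D hD using fun i =>
    hG.exists_componentCompl_forall_adj_iff hta.ne hw hstable ht ha (hC i)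
  have hK := isMinorModel_insert_componentCompl hw (by simp) D hD
  have disjoint_singleton {v : V} (hv : v = t ∨ v = a) (hvw : ∀ i, v ≠ w i) (i : Fin 3) :
      Disjoint {v} (insert (w (i + 1)) (D i : Set V)) := by
    refine Set.disjoint_singleton_left.2 ?_
    rintro (h | h)
    · exact hvw _ h
    · exact ComponentCompl.notMem_of_mem h (by simp; tauto)
  refine hG.1 ((hK.cons (A := {a}) .of_subsingleton ?_ ?_).cons (A := {t}) .of_subsingleton
    ?_ ?_).hasMinor
  · exact disjoint_singleton (.inr rfl) fun i => (ha i).ne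
  · exact fun i => ⟨a, rfl, _, .inl rfl, ha _⟩
  · exact Fin.cases (Set.disjoint_singleton.2 hta.ne)
      (disjoint_singleton (.inl rfl) fun i => (ht i).ne)
  · exact Fin.cases ⟨t, rfl, a, rfl, hta⟩ fun i => ⟨t, rfl, _, .inl rfl, ht _⟩

end Separation

section HeavyInstance

open scoped Classical

section DegreeIn

variable {V : Type*} {G G' : SimpleGraph V} {A B : Finset V} {v : V}

/-- The number of neighbours of `v` in `A`. -/
noncomputable def degreeIn (G : SimpleGraph V) (A : Finset V) (v : V) : ℕ := #{u ∈ A | G.Adj v u}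

theorem degreeIn_le_degreeIn (h : ∀ u ∈ A, G.Adj v u → u ∈ B ∧ G'.Adj v u) :
    degreeIn G A v ≤ degreeIn G' B v :=
  Finset.card_le_card fun u hu => by
    obtain ⟨huA, hvu⟩ := Finset.mem_filter.1 hu
    exact Finset.mem_filter.2 (h u huA hvu)

theorem degreeIn_lt_degreeIn {u : V} (h : ∀ u ∈ A, G.Adj v u → u ∈ B ∧ G'.Adj v u) (huB : u ∈ B)
    (hvu : G'.Adj v u) (hu : ¬G.Adj v u) : degreeIn G A v < degreeIn G' B v :=
  Finset.card_lt_card <| Finset.ssubset_iff_of_subset (fun u hu => by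
    obtain ⟨huA, hvu⟩ := Finset.mem_filter.1 hu
    exact Finset.mem_filter.2 (h u huA hvu)) |>.2
    ⟨u, Finset.mem_filter.2 ⟨huB, hvu⟩, fun h => hu (Finset.mem_filter.1 h).2⟩

theorem degreeIn_erase_add {w : V} (hw : w ∈ A) :
    degreeIn G (A.erase w) v + (if G.Adj v w then 1 else 0) = degreeIn G A v := by
  rw [degreeIn, degreeIn, Finset.card_filter, Finset.card_filter, Finset.sum_erase_add _ _ hw]

theorem degreeIn_mono (h : G ≤ G') (A : Finset V) (v : V) : degreeIn G A v ≤ degreeIn G' A v :=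
  degreeIn_le_degreeIn fun _ hu hvu => ⟨hu, h hvu⟩

theorem degreeIn_pos_iff : 0 < degreeIn G A v ↔ ∃ u ∈ A, G.Adj v u := by
  simp [degreeIn, Finset.card_pos, Finset.Nonempty]

theorem sum_degreeIn_comm (G : SimpleGraph V) (A B : Finset V) :
    ∑ v ∈ A, degreeIn G B v = ∑ v ∈ B, degreeIn G A v := by
  simpa [Finset.bipartiteAbove, Finset.bipartiteBelow, degreeIn, G.adj_comm] using
    Finset.sum_card_bipartiteAbove_eq_sum_card_bipartiteBelow G.Adj (s := A) (t := B)

theorem degreeIn_add_degreeIn_compl [Fintype V] (G : SimpleGraph V) (A : Finset V) (v : V) :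
    degreeIn G A v + degreeIn G Aᶜ v = G.degree v := by
  rw [← card_neighborFinset_eq_degree, degreeIn, degreeIn, ← Finset.card_union_of_disjoint
    (Finset.disjoint_filter_filter disjoint_compl_right), ← Finset.filter_union,
    Finset.union_compl, neighborFinset_eq_filter]

theorem sum_le_mul_degreeIn {f : V → ℕ} {c : ℕ} (hf : ∀ u ∈ A, f u ≤ c)
    (hf' : ∀ u ∈ A, ¬G.Adj v u → f u = 0) : ∑ u ∈ A, f u ≤ c * degreeIn G A v := by
  rw [degreeIn, mul_comm, ← smul_eq_mul, ← Finset.sum_const, Finset.sum_filter]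
  refine Finset.sum_le_sum fun u hu => ?_
  split_ifs with hvu
  exacts [hf u hu, (hf' u hu hvu).le]

end DegreeIn

/-- The set `A` together with all neighbours of its elements. -/
def closedNeighborSet {V : Type*} (G : SimpleGraph V) (A : Set V) : Set V :=
  {v | v ∈ A ∨ ∃ u ∈ A, G.Adj u v}

theorem mem_or_mem_of_mem_closedNeighborSet {V : Type*} {G : SimpleGraph V} {K : Set V}
    {C : G.ComponentCompl K} {v : V} (hv : v ∈ closedNeighborSet G C) : v ∈ C ∨ v ∈ K := by
  obtain hv | ⟨u, hu, huv⟩ := hv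
  · exact .inl hv
  · exact or_iff_not_imp_right.2 fun hK => ComponentCompl.mem_of_adj u v hu hK huv

variable {V : Type*} [Fintype V] {μ : ℕ} {T S R : Finset V} {G : SimpleGraph V}

/-- A planar graph on `S` in which the terminals `T ∩ S` not in `R` are heavy: they have weighted
degree at least `5 * μ + 6` if edges between terminals get weight `μ`. The exempt set `R` of *roots*
appears when an instance is cut along a triangle with two terminal corners. Vertices outside `S` are
isolated, so that the instances obtained by deletion and contraction live on the same type. -/
structure HeavyInstance (μ : ℕ) (T S R : Finset V) (G : SimpleGraph V) : Prop where
  isPlanar : IsPlanar G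
  support_subset : G.support ⊆ S
  mem_of_adj : ∀ ⦃w u⦄, w ∉ T → G.Adj w u → u ∈ T
  three_le_degreeIn : ∀ w ∈ S, w ∉ T → 3 ≤ degreeIn G T w
  roots_subset : R ⊆ T
  card_roots_le : #R ≤ 2
  isClique_roots : G.IsClique R
  exists_notMem_roots : ∃ t ∈ S, t ∈ T ∧ t ∉ R
  le_degreeIn : ∀ t ∈ S, t ∈ T → t ∉ R → 5 * μ + 6 ≤ μ * degreeIn G T t + degreeIn G Tᶜ t

/-- A heavy instance with as few vertices as possible and, for these vertices and roots, an
inclusion-maximal set of edges. -/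
structure CriticalInstance (μ : ℕ) (T S R : Finset V) (G : SimpleGraph V) : Prop
    extends HeavyInstance μ T S R G where
  not_heavyInstance : ∀ ⦃S' R' G'⦄, #S' < #S → ¬HeavyInstance μ T S' R' G'
  le_of_heavyInstance : ∀ ⦃G'⦄, G ≤ G' → HeavyInstance μ T S R G' → G' ≤ G

section Cut

variable {t a k : V}

theorem HeavyInstance.exists_of_componentCompl (h : HeavyInstance μ T S R G) (ht : t ∈ T)
    (ha : a ∈ T) (hk : k ∉ T) (hta : G.Adj t a) (hkt : G.Adj k t) (hka : G.Adj k a)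
    (C : G.ComponentCompl {t, a, k}) (hCR : ∀ r ∈ R, r ∉ C) {z : V} (hz : z ∈ C) (hzT : z ∉ T)
    (hzt : G.Adj z t) (hza : G.Adj z a) :
    ∃ G', HeavyInstance μ T {v ∈ S | v ∈ closedNeighborSet G C} {t, a} G' := by
  generalize hS' : {v ∈ S | v ∈ closedNeighborSet G C} = S'
  have mem_S' {v : V} : v ∈ S' ↔ v ∈ S ∧ v ∈ closedNeighborSet G C := by simp [← hS']
  obtain ⟨G', hG', adj_iff⟩ : ∃ G' ≤ G, ∀ {u v}, G'.Adj u v ↔ G.Adj u v ∧ u ∈ S' ∧ v ∈ S' :=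
    ⟨_, G.spanningCoe_induce_le S', by simp⟩
  have mem_S {u v : V} (huv : G.Adj u v) : u ∈ S := h.support_subset ⟨v, huv⟩
  have htS' : t ∈ S' := mem_S'.2 ⟨mem_S hta, .inr ⟨z, hz, hzt⟩⟩
  have haS' : a ∈ S' := mem_S'.2 ⟨mem_S hta.symm, .inr ⟨z, hz, hza⟩⟩
  have adj_of_mem {u v : V} (hu : u ∈ C) (huv : G.Adj u v) : G'.Adj u v :=
    adj_iff.2 ⟨huv, mem_S'.2 ⟨mem_S huv, .inl hu⟩, mem_S'.2 ⟨mem_S huv.symm, .inr ⟨u, hu, huv⟩⟩⟩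
  have degreeIn_le {v : V} (hv : v ∈ C) (A : Finset V) : degreeIn G A v ≤ degreeIn G' A v :=
    degreeIn_le_degreeIn fun u hu hvu => ⟨hu, adj_of_mem hv hvu⟩
  have mem_or_eq {v : V} (hv : v ∈ S') : v ∈ C ∨ v = t ∨ v = a ∨ v = k :=
    mem_or_mem_of_mem_closedNeighborSet (mem_S'.1 hv).2
  refine ⟨G', h.isPlanar.mono hG', ?_, ?_, ?_, by grind, Finset.card_le_two, ?_, ?_, ?_⟩
  · exact fun v ⟨u, hvu⟩ => (adj_iff.1 hvu).2.1
  · exact fun w u hw hwu => h.mem_of_adj hw (adj_iff.1 hwu).1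
  · intro w hw hwT
    obtain ⟨hwS, hwC | ⟨d, hd, hdw⟩⟩ := mem_S'.1 hw
    · exact (h.three_le_degreeIn w hwS hwT).trans (degreeIn_le hwC T)
    obtain hwC | rfl | rfl | rfl := mem_or_eq hw
    · exact (h.three_le_degreeIn w hwS hwT).trans (degreeIn_le hwC T)
    · contradiction
    · contradiction
    have hdK := C.notMem_of_mem hd
    refine Finset.two_lt_card_iff.2 ⟨t, a, d, ?_, ?_, ?_, hta.ne, by grind, by grind⟩
    · exact Finset.mem_filter.2 ⟨ht, adj_iff.2 ⟨hkt, hw, htS'⟩⟩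
    · exact Finset.mem_filter.2 ⟨ha, adj_iff.2 ⟨hka, hw, haS'⟩⟩
    · exact Finset.mem_filter.2 ⟨h.mem_of_adj hwT hdw.symm, (adj_of_mem hd hdw).symm⟩
  · simpa [isClique_pair] using fun _ => adj_iff.2 ⟨hta, htS', haS'⟩
  · obtain ⟨s, hs, hsta⟩ := Finset.exists_mem_notMem_of_card_lt_card (s := {t, a})
      (Finset.card_le_two.trans_lt (h.three_le_degreeIn z (mem_S hzt) hzT))
    obtain ⟨hsT, hzs⟩ := Finset.mem_filter.1 hs
    exact ⟨s, (adj_iff.1 (adj_of_mem hz hzs)).2.2, hsT, hsta⟩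
  · intro s hs hsT hsR
    have hsC : s ∈ C := by grind
    have := h.le_degreeIn s (mem_S'.1 hs).1 hsT fun hsR => hCR s hsR hsC
    grw [this, degreeIn_le hsC, degreeIn_le hsC]

theorem CriticalInstance.exists_root_mem (h : CriticalInstance μ T S R G) (ht : t ∈ T)
    (ha : a ∈ T) (hk : k ∉ T) (hta : G.Adj t a) (hkt : G.Adj k t) (hka : G.Adj k a)
    {C : G.ComponentCompl {t, a, k}} {z o : V} (hz : z ∈ C) (hzT : z ∉ T) (hzt : G.Adj z t)
    (hza : G.Adj z a) (ho : o ∉ C) (hok : o ≠ k) (hoT : o ∉ T) (hoS : o ∈ S) :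
    ∃ r ∈ R, r ∈ C := by
  by_contra! hCR
  obtain ⟨G', hG'⟩ := h.exists_of_componentCompl ht ha hk hta hkt hka C hCR hz hzT hzt hza
  refine h.not_heavyInstance (Finset.card_lt_card (Finset.filter_ssubset.2 ⟨o, hoS, fun hoC => ?_⟩))
    hG'
  obtain hoC | rfl | rfl | rfl := mem_or_mem_of_mem_closedNeighborSet hoC <;> contradiction

theorem CriticalInstance.degreeIn_filter_le_two (h : CriticalInstance μ T S R G) (ht : t ∈ T)
    (ha : a ∈ T) (hta : G.Adj t a) : degreeIn G {w ∈ Tᶜ | G.Adj t w} a ≤ 2 := by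
  by_contra! hcard
  obtain ⟨N, hN, hN3⟩ := Finset.exists_subset_card_eq hcard
  obtain ⟨w, hw, hwN⟩ : ∃ w : Fin 3 → V, w.Injective ∧ ∀ i, w i ∈ N :=
    ⟨_, Subtype.val_injective.comp (N.equivFinOfCardEq hN3).symm.injective, fun i => Subtype.prop _⟩
  have hwN i : w i ∉ T ∧ G.Adj t (w i) ∧ G.Adj a (w i) := by
    simpa [and_assoc] using hN (hwN i)
  choose hwT htw haw using hwN
  obtain ⟨i, hi⟩ := h.isPlanar.exists_forall_componentCompl_notMem hta hw
    (fun j l hjl => hwT l (h.mem_of_adj (hwT j) hjl)) htw haw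
  have exists_component {j} (hj : j ≠ i) : ∃ C : G.ComponentCompl {t, a, w i}, w j ∈ C :=
    ⟨_, componentComplMk_mem G (by simp [(htw j).ne', (haw j).ne', hw.ne hj])⟩
  have exists_root {j} {C : G.ComponentCompl {t, a, w i}} (hj : w j ∈ C) : ∃ r ∈ R, r ∈ C := by
    obtain ⟨l, hl, hlC⟩ := hi C
    exact h.exists_root_mem ht ha (hwT i) hta (htw i).symm (haw i).symm hj (hwT j) (htw j).symm
      (haw j).symm hlC (hw.ne hl) (hwT l) (h.support_subset ⟨t, (htw l).symm⟩)
  obtain ⟨C, hC⟩ := exists_component (j := i + 1) (by simp)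
  obtain ⟨j, hj, hjC⟩ := hi C
  obtain ⟨D, hD⟩ := exists_component hj
  obtain ⟨r, hr, hrC⟩ := exists_root hC
  obtain ⟨s, hs, hsD⟩ := exists_root hD
  have hsC : s ∈ C := by
    obtain rfl | hrs := eq_or_ne r s
    · exact hrC
    · exact ComponentCompl.mem_of_adj r s hrC (D.notMem_of_mem hsD) (h.isClique_roots hr hs hrs)
  have hCD : C = D := by
    by_contra hCD
    exact Set.disjoint_left.1 (ComponentCompl.pairwise_disjoint hCD) hsC hsD
  exact hjC (hCD ▸ hD)

end Cut

section Local

variable {t w : V}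

theorem HeavyInstance.degreeIn_add_le_degreeIn_contract (h : HeavyInstance μ T S R G) (hw : w ∉ T)
    (hwt : G.Adj w t) (hcommon : ∀ u ∈ T, G.Adj t u → ¬G.Adj w u) {s : V} (hs : s ∈ T) :
    degreeIn G T s + (if G.Adj s w then 1 else 0) ≤ degreeIn (contract G w t) T s := by
  have ne_of_mem {u} (hu : u ∈ T) : u ≠ w := ne_of_mem_of_not_mem hu hw
  have hle u (hu : u ∈ T) (hsu : G.Adj s u) : u ∈ T ∧ (contract G w t).Adj s u :=
    ⟨hu, contract_adj_of_adj hsu (ne_of_mem hs) (ne_of_mem hu)⟩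
  split_ifs with hsw
  · obtain rfl | hst := eq_or_ne s t
    · obtain ⟨u, hu, hus⟩ := Finset.exists_mem_ne
        (Nat.one_lt_two.trans (h.three_le_degreeIn w (h.support_subset ⟨s, hwt⟩) hw)) s
      obtain ⟨huT, hwu⟩ := Finset.mem_filter.1 hu
      exact degreeIn_lt_degreeIn hle huT (contract_adj_right hwu hus.symm)
        fun hsu => hcommon u huT hsu hwu
    · exact degreeIn_lt_degreeIn hle (h.mem_of_adj hw hwt)
        (contract_adj_right hsw.symm hst.symm).symm
        fun hst => hcommon s hs hst.symm hsw.symm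
  · exact degreeIn_le_degreeIn hle

theorem HeavyInstance.contract (h : HeavyInstance μ T S R G) (hμ : 1 ≤ μ) (hw : w ∉ T)
    (hwt : G.Adj w t) (hcommon : ∀ u ∈ T, G.Adj t u → ¬G.Adj w u) :
    HeavyInstance μ T (S.erase w) R (contract G w t) := by
  have ne_of_mem {u} (hu : u ∈ T) : u ≠ w := ne_of_mem_of_not_mem hu hw
  refine ⟨h.isPlanar.contract hwt, contract_support_subset h.support_subset hwt, ?_, ?_,
    h.roots_subset, h.card_roots_le, ?_, ?_, ?_⟩
  · intro v u hv hvu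
    obtain hvu | rfl | rfl := adj_or_eq_of_contract_adj hvu
    exacts [h.mem_of_adj hv hvu, absurd (h.mem_of_adj hw hwt) hv, h.mem_of_adj hw hwt]
  · intro v hv hvT
    obtain ⟨hvw, hvS⟩ := Finset.mem_erase.1 hv
    exact (h.three_le_degreeIn v hvS hvT).trans <| degreeIn_le_degreeIn fun u hu hvu =>
      ⟨hu, contract_adj_of_adj hvu hvw (ne_of_mem hu)⟩
  · exact fun u hu v hv huv => contract_adj_of_adj (h.isClique_roots hu hv huv)
      (ne_of_mem (h.roots_subset hu)) (ne_of_mem (h.roots_subset hv))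
  · obtain ⟨s, hs, hsT, hsR⟩ := h.exists_notMem_roots
    exact ⟨s, Finset.mem_erase.2 ⟨ne_of_mem hsT, hs⟩, hsT, hsR⟩
  · intro s hs hsT hsR
    have hnonterminal : degreeIn G (Tᶜ.erase w) s ≤ degreeIn (_root_.contract G w t) Tᶜ s :=
      degreeIn_le_degreeIn fun u hu hsu => ⟨Finset.mem_of_mem_erase hu,
        contract_adj_of_adj hsu (ne_of_mem hsT) (Finset.ne_of_mem_erase hu)⟩
    set b := if G.Adj s w then 1 else 0
    calc 5 * μ + 6 ≤ μ * degreeIn G T s + degreeIn G Tᶜ s :=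
          h.le_degreeIn s (Finset.mem_of_mem_erase hs) hsT hsR
      _ = μ * degreeIn G T s + (degreeIn G (Tᶜ.erase w) s + 1 * b) := by
          rw [one_mul, degreeIn_erase_add (Finset.mem_compl.2 hw)]
      _ ≤ μ * degreeIn G T s + (degreeIn (_root_.contract G w t) Tᶜ s + μ * b) := by gcongr
      _ = μ * (degreeIn G T s + b) + degreeIn (_root_.contract G w t) Tᶜ s := by ring
      _ ≤ _ := by grw [h.degreeIn_add_le_degreeIn_contract hw hwt hcommon hsT]

theorem CriticalInstance.exists_adj_adj (h : CriticalInstance μ T S R G) (hμ : 1 ≤ μ) (hw : w ∉ T)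
    (hwt : G.Adj w t) : ∃ u ∈ T, G.Adj t u ∧ G.Adj w u := by
  by_contra! hcommon
  exact h.not_heavyInstance (Finset.card_erase_lt_of_mem (h.support_subset ⟨t, hwt⟩))
    (h.contract hμ hw hwt hcommon)

theorem HeavyInstance.sup_edge (h : HeavyInstance μ T S R G) {p q r : V} (hw : w ∉ T)
    (hN : G.neighborSet w = {p, q, r}) : HeavyInstance μ T S R (G ⊔ edge p q) := by
  have hp : G.Adj w p := by simp [← mem_neighborSet, hN]
  have hq : G.Adj w q := by simp [← mem_neighborSet, hN]
  have hle : G ≤ G ⊔ edge p q := le_sup_left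
  refine ⟨h.isPlanar.sup_edge hN, ?_, ?_, ?_, h.roots_subset, h.card_roots_le,
    h.isClique_roots.mono hle, h.exists_notMem_roots, ?_⟩
  · rintro v ⟨u, hvu | hvu⟩
    · exact h.support_subset ⟨u, hvu⟩
    · obtain ⟨⟨rfl, rfl⟩ | ⟨rfl, rfl⟩, -⟩ := (edge_adj ..).1 hvu
      exacts [h.support_subset ⟨w, hp.symm⟩, h.support_subset ⟨w, hq.symm⟩]
  · rintro v u hv (hvu | hvu)
    · exact h.mem_of_adj hv hvu
    · obtain ⟨⟨rfl, rfl⟩ | ⟨rfl, rfl⟩, -⟩ := (edge_adj ..).1 hvu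
      exacts [h.mem_of_adj hw hq, h.mem_of_adj hw hp]
  · exact fun v hv hvT => (h.three_le_degreeIn v hv hvT).trans (degreeIn_mono hle _ _)
  · intro s hs hsT hsR
    grw [h.le_degreeIn s hs hsT hsR, degreeIn_mono hle, degreeIn_mono hle]

theorem CriticalInstance.isClique_neighborSet (h : CriticalInstance μ T S R G) (hwS : w ∈ S)
    (hw : w ∉ T) (hdeg : degreeIn G T w < 4) : G.IsClique (G.neighborSet w) := by
  intro p hp q hq hpq
  obtain ⟨N, hN⟩ : ∃ N : Finset V, N = {u ∈ T | G.Adj w u} := ⟨_, rfl⟩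
  have mem_N {u} : u ∈ N ↔ G.Adj w u := by
    simpa [hN] using fun hwu => h.mem_of_adj hw hwu
  have hqN : q ∈ N.erase p := Finset.mem_erase.2 ⟨hpq.symm, mem_N.2 hq⟩
  have hcard : #N = 3 := hN ▸ le_antisymm (Nat.le_of_lt_succ hdeg) (h.three_le_degreeIn w hwS hw)
  obtain ⟨r, hr⟩ : ∃ r, (N.erase p).erase q = {r} := by
    rw [← Finset.card_eq_one, Finset.card_erase_of_mem hqN, Finset.card_erase_of_mem (mem_N.2 hp),
      hcard]
  have hneighbors : G.neighborSet w = {p, q, r} := by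
    ext u
    rw [mem_neighborSet, ← mem_N, ← Finset.insert_erase (mem_N.2 hp), ← Finset.insert_erase hqN, hr]
    simp
  exact h.le_of_heavyInstance le_sup_left (h.sup_edge hw hneighbors)
    (.inr ((edge_adj ..).2 ⟨.inl ⟨rfl, rfl⟩, hpq⟩))

theorem CriticalInstance.two_mul_degreeIn_compl_le (h : CriticalInstance μ T S R G) (hμ : 1 ≤ μ)
    (ht : t ∈ T) :
    2 * degreeIn G Tᶜ t ≤ 2 * degreeIn G T t + degreeIn G {w ∈ Tᶜ | 4 ≤ degreeIn G T w} t := by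
  let A : Finset V := {w ∈ Tᶜ | G.Adj t w}
  let B : Finset V := {u ∈ T | G.Adj t u}
  have two_le : ∀ w ∈ A, 2 ≤ degreeIn G B w + if 4 ≤ degreeIn G T w then 1 else 0 := by
    intro w hwA
    obtain ⟨hw, htw⟩ : w ∉ T ∧ G.Adj t w := by simpa [A] using hwA
    split_ifs with hdeg
    · obtain ⟨u, hu, htu, hwu⟩ := h.exists_adj_adj hμ hw htw.symm
      have := degreeIn_pos_iff.2 ⟨u, Finset.mem_filter.2 ⟨hu, htu⟩, hwu⟩
      lia
    · have hwS : w ∈ S := h.support_subset ⟨t, htw.symm⟩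
      have hclique := h.isClique_neighborSet hwS hw (not_le.1 hdeg)
      have : degreeIn G (T.erase t) w ≤ degreeIn G B w := degreeIn_le_degreeIn fun u hu hwu => by
        obtain ⟨hut, huT⟩ := Finset.mem_erase.1 hu
        exact ⟨Finset.mem_filter.2 ⟨huT, hclique htw.symm hwu hut.symm⟩, hwu⟩
      have herase := degreeIn_erase_add (G := G) (v := w) ht
      rw [if_pos htw.symm] at herase
      have := h.three_le_degreeIn w hwS hw
      lia
  calc 2 * degreeIn G Tᶜ t = ∑ w ∈ A, 2 := by simp [A, degreeIn, mul_comm]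
    _ ≤ ∑ w ∈ A, (degreeIn G B w + if 4 ≤ degreeIn G T w then 1 else 0) :=
      Finset.sum_le_sum two_le
    _ = ∑ u ∈ B, degreeIn G A u + degreeIn G {w ∈ Tᶜ | 4 ≤ degreeIn G T w} t := by
      rw [Finset.sum_add_distrib, sum_degreeIn_comm, ← Finset.card_filter, degreeIn,
        Finset.filter_comm]
    _ ≤ ∑ u ∈ B, 2 + degreeIn G {w ∈ Tᶜ | 4 ≤ degreeIn G T w} t := by
      gcongr with u hu
      obtain ⟨huT, htu⟩ := Finset.mem_filter.1 hu
      exact h.degreeIn_filter_le_two ht huT htu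
    _ = _ := by simp [B, degreeIn, mul_comm]

end Local

section Discharging

theorem HeavyInstance.three_le_card (h : HeavyInstance μ T S R G) : 3 ≤ #S := by
  by_contra! hcard
  obtain ⟨t, htS, htT, htR⟩ := h.exists_notMem_roots
  have hneighbors : G.degree t ≤ #S := Finset.card_le_card fun u hu =>
    h.support_subset ⟨t, ((mem_neighborFinset ..).1 hu).symm⟩
  have hdegree := degreeIn_add_degreeIn_compl G T t
  have hterminal : degreeIn G T t ≤ 2 := by lia
  have hheavy := h.le_degreeIn t htS htT htR
  grw [hterminal] at hheavy
  lia

theorem HeavyInstance.sum_degreeIn_add_twelve_le (h : HeavyInstance μ T S R G) :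
    ∑ t ∈ T, degreeIn G T t + 2 * ∑ w ∈ Tᶜ, degreeIn G T w + 12 ≤ 6 * #S := by
  have hsum := G.sum_degrees_eq_twice_card_edges
  rw [← Finset.sum_add_sum_compl T] at hsum
  simp_rw [← degreeIn_add_degreeIn_compl G T, Finset.sum_add_distrib] at hsum
  have hcomm := sum_degreeIn_comm G T Tᶜ
  have heuler := h.isPlanar.card_edgeFinset_add_six_le h.support_subset h.three_le_card
  lia

theorem HeavyInstance.card_roots_le_degreeIn_add_one (h : HeavyInstance μ T S R G) {t : V}
    (ht : t ∈ R) : #R ≤ degreeIn G T t + 1 := by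
  rw [← Finset.card_erase_add_one ht]
  gcongr
  refine Finset.card_le_card fun u hu => ?_
  obtain ⟨hut, hu⟩ := Finset.mem_erase.1 hu
  exact Finset.mem_filter.2 ⟨h.roots_subset hu, h.isClique_roots ht hu hut.symm⟩

theorem HeavyInstance.twelve_mul_card_add_sum_le (h : HeavyInstance μ T S R G) :
    12 * #(Tᶜ ∩ S) + ∑ t ∈ T, degreeIn G {w ∈ Tᶜ | 4 ≤ degreeIn G T w} t ≤
      4 * ∑ w ∈ Tᶜ, degreeIn G T w := by
  rw [sum_degreeIn_comm, ← Finset.filter_mem_eq_inter, Finset.card_filter, Finset.sum_filter,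
    Finset.mul_sum, Finset.mul_sum, ← Finset.sum_add_distrib]
  refine Finset.sum_le_sum fun w hw => ?_
  have := fun hwS => h.three_le_degreeIn w hwS (Finset.mem_compl.1 hw)
  split_ifs <;> lia

theorem CriticalInstance.twelve_le (h : CriticalInstance μ T S R G) (hμ : 1 ≤ μ) {t : V}
    (htS : t ∈ S) (htT : t ∈ T) (htR : t ∉ R) :
    12 ≤ 2 * degreeIn G T t + degreeIn G {w ∈ Tᶜ | 4 ≤ degreeIn G T w} t := by
  by_contra! hlt
  have hcharge := h.two_mul_degreeIn_compl_le hμ htT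
  have hterminal : degreeIn G T t ≤ 5 := by lia
  have hheavy := h.le_degreeIn t htS htT htR
  grw [hterminal] at hheavy
  lia

theorem CriticalInstance.twelve_mul_card_le (h : CriticalInstance μ T S R G) (hμ : 1 ≤ μ) :
    12 * #(T ∩ S) ≤ 2 * ∑ t ∈ T, degreeIn G T t +
      ∑ t ∈ T, degreeIn G {w ∈ Tᶜ | 4 ≤ degreeIn G T w} t + 20 := by
  have hroots := h.card_roots_le
  have hlocal : ∀ t ∈ T, (if t ∈ S then 12 else 0) ≤ 2 * degreeIn G T t +
      degreeIn G {w ∈ Tᶜ | 4 ≤ degreeIn G T w} t + if t ∈ R then 14 - 2 * #R else 0 := by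
    intro t htT
    have hroot := fun htR => h.card_roots_le_degreeIn_add_one (t := t) htR
    have hnonroot := fun htS htR => h.twelve_le hμ (t := t) htS htT htR
    split_ifs with htS htR <;> grind
  have hsum := Finset.sum_le_sum hlocal
  rw [Finset.sum_add_distrib, Finset.sum_add_distrib, ← Finset.mul_sum,
    Finset.sum_ite_mem, Finset.sum_ite_mem, Finset.inter_eq_right.2 h.roots_subset,
    Finset.sum_const, Finset.sum_const, smul_eq_mul, smul_eq_mul] at hsum
  interval_cases #R <;> lia

theorem not_criticalInstance (hμ : 1 ≤ μ) : ¬CriticalInstance μ T S R G := by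
  intro h
  have hterminals := h.twelve_mul_card_le hμ
  have hnonterminals := h.twelve_mul_card_add_sum_le
  have heuler := h.sum_degreeIn_add_twelve_le
  have hcard : #(T ∩ S) + #(Tᶜ ∩ S) = #S := by
    rw [Finset.inter_comm T, Finset.inter_comm Tᶜ, ← Finset.sdiff_eq_inter_compl,
      Finset.card_inter_add_card_sdiff]
  lia

theorem not_heavyInstance (hμ : 1 ≤ μ) : ¬HeavyInstance μ T S R G := by
  induction hn : #S using Nat.strong_induction_on generalizing S R G with
  | _ n ih =>
    intro h
    obtain ⟨G', -, hG'⟩ := (Set.toFinite {G' | HeavyInstance μ T S R G'}).exists_le_maximal h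
    exact not_criticalInstance hμ ⟨hG'.prop, fun S' R' G'' hlt => ih _ (hn ▸ hlt) rfl,
      fun G'' hle hG'' => hG'.le_of_ge hG'' hle⟩

end Discharging

section Multigraph

theorem heavyInstance_of_multiplicity {m : V → V → ℕ} (hsymm : ∀ a b, m a b = m b a)
    (hm : ∀ a b, ¬G.Adj a b → m a b = 0) (hplanar : IsPlanar G)
    (hstable : ∀ ⦃w u⦄, w ∉ T → G.Adj w u → u ∈ T) (hdeg : ∀ w ∉ T, 3 ≤ ∑ v, m w v)
    (hpar : ∀ w ∉ T, ∀ v, m w v ≤ 1) (hμ : ∀ t ∈ T, ∀ u ∈ T, m t u ≤ μ) (hT : T.Nonempty)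
    (hheavy : ∀ t ∈ T, 5 * μ + 6 ≤ ∑ v, m t v) : HeavyInstance μ T Finset.univ ∅ G where
  isPlanar := hplanar
  support_subset := by simp
  mem_of_adj := hstable
  three_le_degreeIn w _ hw := by
    have hnonterminal : ∑ v ∈ Tᶜ, m w v = 0 := Finset.sum_eq_zero fun v hv =>
      hm w v fun hwv => Finset.mem_compl.1 hv (hstable hw hwv)
    calc 3 ≤ ∑ v ∈ T, m w v + ∑ v ∈ Tᶜ, m w v := (hdeg w hw).trans_eq
          (Finset.sum_add_sum_compl T _).symm
      _ ≤ degreeIn G T w := by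
        simpa [hnonterminal] using sum_le_mul_degreeIn (fun v _ => hpar w hw v) fun v _ => hm w v
  roots_subset := Finset.empty_subset T
  card_roots_le := by simp
  isClique_roots := by simp
  exists_notMem_roots := by simpa using hT.exists_mem
  le_degreeIn t _ ht _ := by
    rw [← one_mul (degreeIn G Tᶜ t)]
    calc 5 * μ + 6 ≤ ∑ v ∈ T, m t v + ∑ v ∈ Tᶜ, m t v := (hheavy t ht).trans_eq
          (Finset.sum_add_sum_compl T _).symm
      _ ≤ _ := add_le_add (sum_le_mul_degreeIn (hμ t ht) fun v _ => hm t v)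
        (sum_le_mul_degreeIn (fun v hv => hsymm t v ▸ hpar v (Finset.mem_compl.1 hv) t)
          fun v _ => hm t v)

theorem MultiElemConn.le_sum {m : V → V → ℕ} {T : Set V} {u v : V} {k : ℕ}
    (h : MultiElemConn G m T u v k) (huv : u ≠ v) : k ≤ ∑ w, m u w := by
  obtain ⟨P, -, -, hP⟩ := h
  have exists_first_edge i : ∃ w, s(u, w) ∈ (P i).edges :=
    ⟨_, Walk.mk_start_snd_mem_edges (Walk.not_nil_of_ne huv)⟩
  choose w hw using exists_first_edge
  calc k = ∑ x, #{i | w i = x} := by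
        simpa using Finset.card_eq_sum_card_fiberwise (s := Finset.univ) (f := w)
          (t := Finset.univ) (by simp)
    _ ≤ ∑ x, m u x := Finset.sum_le_sum fun x _ => by
        rw [← Set.ncard_coe_finset]
        refine (Set.ncard_le_ncard (fun i hi => ?_) (Set.toFinite _)).trans (hP u x)
        obtain rfl : w i = x := by simpa using hi
        exact hw i

theorem planar_parallel_edges_general (T : Set V) (m : V → V → ℕ)
    (hsymm : ∀ a b, m a b = m b a) (hloop : ∀ a, m a a = 0)
    (G : SimpleGraph V) (hG : ∀ a b, G.Adj a b ↔ a ≠ b ∧ 0 < m a b)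
    (hplanar : IsPlanar G)
    (hstable : ∀ a b, a ∉ T → b ∉ T → ¬ G.Adj a b)
    (hdeg : ∀ w, w ∉ T → 3 ≤ ∑ v, m w v)
    (hpar : ∀ a b, 2 ≤ m a b → a ∈ T ∧ b ∈ T)
    (k : ℕ) (hk : 10 < k) (hT : T.Nonempty) (hheavy : ∀ t ∈ T, k ≤ ∑ v, m t v) :
    ∃ t₁ ∈ T, ∃ t₂ ∈ T, t₁ ≠ t₂ ∧ (k + 4) / 5 - 1 ≤ m t₁ t₂ := by
  by_contra! hfew
  have eq_zero_of_not_adj a b (hab : ¬G.Adj a b) : m a b = 0 := by grind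
  refine not_heavyInstance (μ := (k + 4) / 5 - 2) (by lia) <|
    heavyInstance_of_multiplicity (T := T.toFinset) hsymm eq_zero_of_not_adj hplanar
      ?_ ?_ ?_ ?_ ?_ ?_
  all_goals simp only [Set.mem_toFinset, Set.toFinset_nonempty]
  · exact fun w u hw hwu => by_contra fun hu => hstable w u hw hu hwu
  · exact hdeg
  · exact fun w hw v => by grind
  · exact fun t ht u hu => by grind
  · exact hT
  · exact fun t ht => by grind

end Multigraph

end HeavyInstance

/-- In a reduced instance of the planar Steiner packing problem (a planar multigraph in
which the non-terminals form a stable set of minimum degree 3 and parallel edges occur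
only between terminals), if the terminal set is `k`-element-connected with `k > 10`,
then some two terminals are joined by at least `⌈k/5⌉ - 1` parallel edges. -/
theorem planar_parallel_edges {V : Type*} [Fintype V] [DecidableEq V]
    (T : Set V) (m : V → V → ℕ)
    (hsymm : ∀ a b, m a b = m b a) (hloop : ∀ a, m a a = 0)
    (G : SimpleGraph V) (hG : ∀ a b, G.Adj a b ↔ a ≠ b ∧ 0 < m a b)
    (hplanar : IsPlanar G)
    (hstable : ∀ a b, a ∉ T → b ∉ T → ¬ G.Adj a b)
    (hdeg : ∀ w, w ∉ T → 3 ≤ ∑ v, m w v)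
    (hpar : ∀ a b, 2 ≤ m a b → a ∈ T ∧ b ∈ T)
    (k : ℕ) (hk : 10 < k) (hT : T.Nontrivial)
    (hconn : ∀ u ∈ T, ∀ v ∈ T, u ≠ v → MultiElemConn G m T u v k) :
    ∃ t₁ ∈ T, ∃ t₂ ∈ T, t₁ ≠ t₂ ∧ (k + 4) / 5 - 1 ≤ m t₁ t₂ := by
  refine planar_parallel_edges_general T m hsymm hloop G hG hplanar hstable hdeg hpar k hk
    hT.nonempty fun t ht => ?_
  obtain ⟨u, hu, hut⟩ := hT.exists_ne t
  exact (hconn t ht u hu hut.symm).le_sum hut.symm
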